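/- arXiv:math/0502118 — 8 statements merged into one kernel-verified Lean document; each statement's English description precedes it below -/
import Mathlib

section
/- Let k be a field of characteristic 0, n ≥ 2, M a finite-dimensional k-vector space and π : S_n → GL_k(M) a group homomorphism, where S_n = Equiv.Perm (Fin n). For s ∈ S_n and x ∈ End_k(M) write s·x = π(s) ∘ x ∘ π(s)⁻¹. Then the assignment t ↦ t 0 1 is a bijection between: (1) the set of families t assigning to each ordered pair (i, j) of distinct elements of Fin n an endomorphism t i j ∈ End_k(M), satisfying t i j = t j i, the equivariance s·(t i j) = t (s i) (s j) for all s ∈ S_n, and the infinitesimal braid relations [t i j, t i k + t k j] = 0 for pairwise distinct i, j, k and [t i j, t k l] = 0 for pairwise distinct i, j, k, l (brackets are commutators of endomorphisms); and (2) the set of endomorphisms τ ∈ End_k(M) such that s·τ = τ for every s ∈ S_n with s({0,1}) = {0,1}, and, when n ≥ 3, [τ, (swap 0 2)·τ + (swap 1 2)·τ] = 0, and, when n ≥ 4, [τ, (swap 0 2 · swap 1 3)·τ] = 0. -/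
/-- Conjugation of an endomorphism by the image of a group element under a
representation by linear automorphisms: `s · x = π(s) ∘ x ∘ π(s)⁻¹`. -/
def conjAct {k M G : Type*} [CommSemiring k] [AddCommMonoid M] [Module k M] [Group G]
    (π : G →* (Module.End k M)ˣ) (s : G) (x : Module.End k M) : Module.End k M :=
  ((π s : (Module.End k M)ˣ) : Module.End k M) * x *
    (((π s)⁻¹ : (Module.End k M)ˣ) : Module.End k M)

section BraidHelpers

variable {k M G : Type*} [Field k] [AddCommGroup M] [Module k M] [Group G]

theorem conjAct_mul_aux (π : G →* (Module.End k M)ˣ) (s s' : G) (x : Module.End k M) :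
    conjAct π (s * s') x = conjAct π s (conjAct π s' x) := by
  simp [conjAct, mul_assoc]

theorem conjAct_one_aux (π : G →* (Module.End k M)ˣ) (x : Module.End k M) :
    conjAct π 1 x = x := by
  simp [conjAct]

theorem conjAct_zero_aux (π : G →* (Module.End k M)ˣ) (s : G) :
    conjAct π s (0 : Module.End k M) = 0 := by
  simp [conjAct]

theorem conjAct_add_aux (π : G →* (Module.End k M)ˣ) (s : G) (x y : Module.End k M) :
    conjAct π s (x + y) = conjAct π s x + conjAct π s y := by
  simp [conjAct, mul_add, add_mul]

theorem conjAct_lie_aux (π : G →* (Module.End k M)ˣ) (s : G) (x y : Module.End k M) :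
    conjAct π s ⁅x, y⁆ = ⁅conjAct π s x, conjAct π s y⁆ := by
  simp only [conjAct, Ring.lie_def, mul_sub, sub_mul, mul_assoc, Units.inv_mul_cancel_left]

theorem exists_perm_aux {α ι : Type*} [Finite α] (f g : ι → α)
    (hf : Function.Injective f) (hg : Function.Injective g) :
    ∃ s : Equiv.Perm α, ∀ x, s (f x) = g x := by
  classical
  have := Fintype.ofFinite α
  let e : {a // a ∈ Set.range f} ≃ {a // a ∈ Set.range g} :=
    (Equiv.ofInjective f hf).symm.trans (Equiv.ofInjective g hg)
  refine ⟨e.extendSubtype, fun x => ?_⟩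
  rw [Equiv.extendSubtype_apply_of_mem e (f x) ⟨x, rfl⟩]
  have : (⟨f x, ⟨x, rfl⟩⟩ : {a // a ∈ Set.range f}) = Equiv.ofInjective f hf x := rfl
  simp only [e, this, Equiv.trans_apply, Equiv.symm_apply_apply]
  rfl

theorem exists_perm_four_aux {α : Type*} [Finite α] {a b c d i j l r : α}
    (h1 : a ≠ b) (h2 : a ≠ c) (h3 : a ≠ d) (h4 : b ≠ c) (h5 : b ≠ d) (h6 : c ≠ d)
    (g1 : i ≠ j) (g2 : i ≠ l) (g3 : i ≠ r) (g4 : j ≠ l) (g5 : j ≠ r) (g6 : l ≠ r) :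
    ∃ s : Equiv.Perm α, s a = i ∧ s b = j ∧ s c = l ∧ s d = r := by
  obtain ⟨s, hs⟩ := exists_perm_aux ![a, b, c, d] ![i, j, l, r]
    (by intro x y; fin_cases x <;> fin_cases y <;> simp_all [eq_comm])
    (by intro x y; fin_cases x <;> fin_cases y <;> simp_all [eq_comm])
  exact ⟨s, hs 0, hs 1, hs 2, hs 3⟩

theorem exists_perm_three_aux {α : Type*} [Finite α] {a b c i j l : α}
    (h1 : a ≠ b) (h2 : a ≠ c) (h4 : b ≠ c) (g1 : i ≠ j) (g2 : i ≠ l) (g4 : j ≠ l) :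
    ∃ s : Equiv.Perm α, s a = i ∧ s b = j ∧ s c = l := by
  obtain ⟨s, hs⟩ := exists_perm_aux ![a, b, c] ![i, j, l]
    (by intro x y; fin_cases x <;> fin_cases y <;> simp_all [eq_comm])
    (by intro x y; fin_cases x <;> fin_cases y <;> simp_all [eq_comm])
  exact ⟨s, hs 0, hs 1, hs 2⟩

theorem exists_perm_two_aux {α : Type*} [Finite α] {a b i j : α} (h1 : a ≠ b) (g1 : i ≠ j) :
    ∃ s : Equiv.Perm α, s a = i ∧ s b = j := by
  obtain ⟨s, hs⟩ := exists_perm_aux ![a, b] ![i, j]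
    (by intro x y; fin_cases x <;> fin_cases y <;> simp_all [eq_comm])
    (by intro x y; fin_cases x <;> fin_cases y <;> simp_all [eq_comm])
  exact ⟨s, hs 0, hs 1⟩

/-- A stabilizer-invariant endomorphism spreads to an equivariant family. -/
theorem exists_family_aux {α : Type*} [Finite α] (π : Equiv.Perm α →* (Module.End k M)ˣ)
    {a b : α} (hab : a ≠ b) (τ : Module.End k M)
    (h : ∀ s : Equiv.Perm α, s '' ({a, b} : Set α) = {a, b} → conjAct π s τ = τ) :
    ∃ t : α → α → Module.End k M, (∀ i, t i i = 0) ∧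
      (∀ s : Equiv.Perm α, t (s a) (s b) = conjAct π s τ) ∧
      (∀ s : Equiv.Perm α, t (s b) (s a) = conjAct π s τ) := by
  classical
  let t : α → α → Module.End k M := fun i j =>
    if hs : ∃ s : Equiv.Perm α, s a = i ∧ s b = j then conjAct π hs.choose τ else 0
  have key : ∀ s : Equiv.Perm α, t (s a) (s b) = conjAct π s τ := by
    intro s
    have hs : ∃ s' : Equiv.Perm α, s' a = s a ∧ s' b = s b := ⟨s, rfl, rfl⟩
    have ht : t (s a) (s b) = conjAct π hs.choose τ := dif_pos hs
    obtain ⟨h1, h2⟩ := hs.choose_spec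
    rw [ht]
    generalize hs.choose = u at *
    have : u = s * (s⁻¹ * u) := by group
    rw [this, conjAct_mul_aux, h]
    simp [Set.image_pair, h1, h2]
  refine ⟨t, fun i => dif_neg ?_, key, fun s => ?_⟩
  · rintro ⟨s, h1, h2⟩
    exact hab (s.injective (h1.trans h2.symm))
  · have := key (s * Equiv.swap a b)
    simp only [Equiv.Perm.mul_apply, Equiv.swap_apply_left, Equiv.swap_apply_right] at this
    rw [this, conjAct_mul_aux, h]
    simp [Set.image_pair, Set.pair_comm]

end BraidHelpers

/-- The variety of braided extensions: the map `t ↦ t₀₁` is a bijection between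
representations of the infinitesimal braid algebra `𝔅ₙ` restricting to the
`S_n`-module `M` (families `t i j` of endomorphisms, symmetric, `S_n`-equivariant,
vanishing on the diagonal, satisfying the infinitesimal braid relations) and
endomorphisms `τ` invariant under `S_{2,n-2}` with `C₁(τ) = C₂(τ) = 0`. -/
theorem variety_of_braided_extensions_bijection
    (k : Type*) [Field k] [CharZero k]
    (n : ℕ) (hn : 2 ≤ n)
    (M : Type*) [AddCommGroup M] [Module k M] [FiniteDimensional k M]
    (π : Equiv.Perm (Fin n) →* (Module.End k M)ˣ) :
    Set.BijOn
      (fun t : Fin n → Fin n → Module.End k M => t ⟨0, by omega⟩ ⟨1, by omega⟩)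
      {t : Fin n → Fin n → Module.End k M |
        (∀ i : Fin n, t i i = 0) ∧
        (∀ i j : Fin n, i ≠ j → t i j = t j i) ∧
        (∀ (s : Equiv.Perm (Fin n)) (i j : Fin n), i ≠ j →
          conjAct π s (t i j) = t (s i) (s j)) ∧
        (∀ i j l : Fin n, i ≠ j → i ≠ l → j ≠ l → ⁅t i j, t i l + t l j⁆ = 0) ∧
        (∀ i j l r : Fin n, i ≠ j → i ≠ l → i ≠ r → j ≠ l → j ≠ r → l ≠ r →
          ⁅t i j, t l r⁆ = 0)}
      {τ : Module.End k M |
        (∀ s : Equiv.Perm (Fin n),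
          (⇑s '' ({⟨0, by omega⟩, ⟨1, by omega⟩} : Set (Fin n))
              = ({⟨0, by omega⟩, ⟨1, by omega⟩} : Set (Fin n))) →
          conjAct π s τ = τ) ∧
        (∀ h3 : 3 ≤ n,
          ⁅τ, conjAct π (Equiv.swap ⟨0, by omega⟩ ⟨2, by omega⟩) τ
            + conjAct π (Equiv.swap ⟨1, by omega⟩ ⟨2, by omega⟩) τ⁆ = 0) ∧
        (∀ h4 : 4 ≤ n,
          ⁅τ, conjAct π (Equiv.swap ⟨0, by omega⟩ ⟨2, by omega⟩
            * Equiv.swap ⟨1, by omega⟩ ⟨3, by omega⟩) τ⁆ = 0)} := by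
  have hab : (⟨0, by omega⟩ : Fin n) ≠ ⟨1, by omega⟩ := by simp
  refine ⟨?_, ?_, ?_⟩
  · rintro t ⟨-, hsym, heq, hb3, hb4⟩
    refine ⟨?_, ?_, ?_⟩
    · intro s hs
      simp only
      rw [heq s _ _ hab]
      rw [Set.image_pair, Set.pair_eq_pair_iff] at hs
      rcases hs with ⟨h1, h2⟩ | ⟨h1, h2⟩
      · rw [h1, h2]
      · rw [h1, h2]
        exact hsym _ _ hab.symm
    · intro h3
      simp only
      have h02 : (⟨0, by omega⟩ : Fin n) ≠ ⟨2, by omega⟩ := by simp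
      have h12 : (⟨1, by omega⟩ : Fin n) ≠ ⟨2, by omega⟩ := by simp
      rw [heq _ _ _ hab, heq _ _ _ hab, Equiv.swap_apply_left, Equiv.swap_apply_left,
        Equiv.swap_apply_of_ne_of_ne hab.symm h12, Equiv.swap_apply_of_ne_of_ne hab h02, add_comm]
      exact hb3 _ _ _ hab h02 h12
    · intro h4
      simp only
      rw [heq _ _ _ hab]
      have e0 : (Equiv.swap (⟨0, by omega⟩ : Fin n) ⟨2, by omega⟩
          * Equiv.swap ⟨1, by omega⟩ ⟨3, by omega⟩ : Equiv.Perm (Fin n)) ⟨0, by omega⟩ = ⟨2, by omega⟩ := by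
        simp [Equiv.swap_apply_def]
      have e1 : (Equiv.swap (⟨0, by omega⟩ : Fin n) ⟨2, by omega⟩
          * Equiv.swap ⟨1, by omega⟩ ⟨3, by omega⟩ : Equiv.Perm (Fin n)) ⟨1, by omega⟩ = ⟨3, by omega⟩ := by
        simp [Equiv.swap_apply_def]
      rw [e0, e1]
      apply hb4 <;> simp
  · rintro t ⟨hd, -, heq, -, -⟩ t' ⟨hd', -, heq', -, -⟩ h
    simp only at h
    funext i j
    by_cases hij : i = j
    · rw [hij, hd, hd']
    · obtain ⟨s, h1, h2⟩ := exists_perm_two_aux hab hij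
      rw [← h1, ← h2, ← heq _ _ _ hab, ← heq' _ _ _ hab, h]
  · rintro τ ⟨hinv, hc1, hc2⟩
    obtain ⟨t, hd, ht, ht'⟩ := exists_family_aux π hab τ hinv
    have ht1 : t ⟨0, by omega⟩ ⟨1, by omega⟩ = τ := by
      have := ht 1
      simpa [conjAct_one_aux] using this
    refine ⟨t, ⟨hd, ?_, ?_, ?_, ?_⟩, ht1⟩
    · intro i j hij
      obtain ⟨s, rfl, rfl⟩ := exists_perm_two_aux hab hij
      rw [ht, ht']
    · intro s i j hij
      obtain ⟨u, rfl, rfl⟩ := exists_perm_two_aux hab hij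
      rw [ht, ← conjAct_mul_aux, ← ht, Equiv.Perm.mul_apply, Equiv.Perm.mul_apply]
    · intro i j l hij hil hjl
      have h3 : 3 ≤ n := by omega
      have h02 : (⟨0, by omega⟩ : Fin n) ≠ ⟨2, by omega⟩ := by simp
      have h12 : (⟨1, by omega⟩ : Fin n) ≠ ⟨2, by omega⟩ := by simp
      obtain ⟨s, rfl, rfl, rfl⟩ := exists_perm_three_aux hab h02 h12 hij hil hjl
      have e1 := ht (s * Equiv.swap ⟨1, by omega⟩ ⟨2, by omega⟩)
      have e2 := ht (s * Equiv.swap ⟨0, by omega⟩ ⟨2, by omega⟩)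
      rw [Equiv.Perm.mul_apply, Equiv.Perm.mul_apply, Equiv.swap_apply_left,
        Equiv.swap_apply_of_ne_of_ne hab h02] at e1
      rw [Equiv.Perm.mul_apply, Equiv.Perm.mul_apply, Equiv.swap_apply_left,
        Equiv.swap_apply_of_ne_of_ne hab.symm h12] at e2
      rw [e1, e2, ht, conjAct_mul_aux, conjAct_mul_aux, ← conjAct_add_aux, ← conjAct_lie_aux,
        add_comm, hc1 h3, conjAct_zero_aux]
    · intro i j l r hij hil hir hjl hjr hlr
      have h4 : 4 ≤ n := by omega
      obtain ⟨s, rfl, rfl, rfl, rfl⟩ := exists_perm_four_aux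
        (a := (⟨0, by omega⟩ : Fin n)) (b := ⟨1, by omega⟩) (c := ⟨2, by omega⟩)
        (d := ⟨3, by omega⟩) (by simp) (by simp) (by simp) (by simp) (by simp) (by simp)
        hij hil hir hjl hjr hlr
      have e0 : (Equiv.swap (⟨0, by omega⟩ : Fin n) ⟨2, by omega⟩
          * Equiv.swap ⟨1, by omega⟩ ⟨3, by omega⟩ : Equiv.Perm (Fin n)) ⟨0, by omega⟩ = ⟨2, by omega⟩ := by
        simp [Equiv.swap_apply_def]
      have e1 : (Equiv.swap (⟨0, by omega⟩ : Fin n) ⟨2, by omega⟩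
          * Equiv.swap ⟨1, by omega⟩ ⟨3, by omega⟩ : Equiv.Perm (Fin n)) ⟨1, by omega⟩ = ⟨3, by omega⟩ := by
        simp [Equiv.swap_apply_def]
      have e := ht (s * (Equiv.swap (⟨0, by omega⟩ : Fin n) ⟨2, by omega⟩
          * Equiv.swap ⟨1, by omega⟩ ⟨3, by omega⟩))
      rw [Equiv.Perm.mul_apply s, Equiv.Perm.mul_apply s, e0, e1] at e
      rw [e, ht, conjAct_mul_aux, ← conjAct_lie_aux, hc2 h4, conjAct_zero_aux]
end

section
/- Let n ≥ 2 and let B_n be the braid group on n strands, the group presented by generators σ_1, …, σ_{n−1} subject to the relations σ_i σ_{i+1} σ_i = σ_{i+1} σ_i σ_{i+1} for 1 ≤ i ≤ n−2 and σ_i σ_j = σ_j σ_i for |i−j| ≥ 2 (realized as a PresentedGroup). Let k be a field of characteristic 0 and let B and C be nonzero finite-dimensional k-linear representations of B_n on which every σ_i² acts as the identity (so that B and C factor through the symmetric group S_n). Assume that every k-linear map f : C → B which commutes with the actions of σ_1 and of σ_3, σ_4, …, σ_{n−1} is zero (i.e. Hom over the Young subgroup S_2 × S_{n−2} from C to B vanishes).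 Then every extension of B_n-representations of C by B splits: for every finite-dimensional k-linear representation E of B_n and every B_n-invariant subspace W of E such that W is B_n-equivariantly isomorphic to B and the quotient representation E/W is B_n-equivariantly isomorphic to C, there exists a B_n-invariant complement of W in E. (Ext_{B_n}(C, B) = 0.) -/
/-- The braid relations on `m` generators `σ_1, …, σ_m` (indexed by `Fin m`):
`σ_i σ_{i+1} σ_i = σ_{i+1} σ_i σ_{i+1}` and `σ_i σ_j = σ_j σ_i` for `|i - j| ≥ 2`. -/
def braidRels (m : ℕ) : Set (FreeGroup (Fin m)) :=
  {r | (∃ i j : Fin m, (i : ℕ) + 1 = (j : ℕ) ∧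
          r = FreeGroup.of i * FreeGroup.of j * FreeGroup.of i *
              (FreeGroup.of j * FreeGroup.of i * FreeGroup.of j)⁻¹) ∨
       (∃ i j : Fin m, (i : ℕ) + 2 ≤ (j : ℕ) ∧
          r = FreeGroup.of i * FreeGroup.of j * (FreeGroup.of j * FreeGroup.of i)⁻¹)}

/-- The braid group on `n` strands, presented by `σ_1, …, σ_{n-1}` and the braid
and locality relations. -/
abbrev BraidGroup (n : ℕ) := PresentedGroup (braidRels (n - 1))

/-- The word `s_k s_{k-1} ⋯ s_{k-d+1}`. -/
def descWord {G : Type*} [Group G] (s : ℕ → G) (k : ℕ) : ℕ → G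
  | 0 => 1
  | d + 1 => descWord s k d * s (k - d)

theorem descWord_comm {G : Type*} [Group G] (s : ℕ → G) (m : ℕ)
    (hcomm : ∀ i j, i + 2 ≤ j → j < m → s i * s j = s j * s i)
    (k : ℕ) (hk : k < m) (d i : ℕ) (h : i + d < k) :
    descWord s k d * s i = s i * descWord s k d := by
  induction d with
  | zero => simp [descWord]
  | succ d ih =>
    rw [descWord, mul_assoc, ← hcomm i (k - d) (by omega) (by omega), ← mul_assoc,
      ih (by omega), mul_assoc]

theorem descWord_shift {G : Type*} [Group G] (s : ℕ → G) (m : ℕ)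
    (hbr : ∀ i, i + 1 < m → s i * s (i + 1) * s i = s (i + 1) * s i * s (i + 1))
    (hcomm : ∀ i j, i + 2 ≤ j → j < m → s i * s j = s j * s i)
    (k : ℕ) (hk : k < m) (i : ℕ) (hi : i + 1 ≤ k) (d : ℕ) (hd : d ≤ k + 1)
    (h : k + 1 ≤ i + d) :
    descWord s k d * s (i + 1) = s i * descWord s k d := by
  induction d with
  | zero => omega
  | succ d ih =>
    by_cases h' : k + 1 ≤ i + d
    · rw [descWord, mul_assoc, hcomm (k - d) (i + 1) (by omega) (by omega), ← mul_assoc,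
        ih (by omega) h', mul_assoc]
    · obtain ⟨e, rfl⟩ : ∃ e, d = e + 1 := ⟨d - 1, by omega⟩
      have h1 : k - e = i + 1 := by omega
      have h2 : k - (e + 1) = i := by omega
      rw [descWord, descWord, h1, h2]
      have hb := hbr i (by omega)
      have hc := descWord_comm s m hcomm k hk e i (by omega)
      calc descWord s k e * s (i + 1) * s i * s (i + 1)
          = descWord s k e * (s (i + 1) * s i * s (i + 1)) := by group
        _ = (descWord s k e * s i) * (s (i + 1) * s i) := by rw [← hb]; group
        _ = _ := by rw [hc]; group

theorem finite_closure_of_braid {G : Type*} [Group G] (s : ℕ → G) (m : ℕ)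
    (hbr : ∀ i, i + 1 < m → s i * s (i + 1) * s i = s (i + 1) * s i * s (i + 1))
    (hcomm : ∀ i j, i + 2 ≤ j → j < m → s i * s j = s j * s i)
    (hsq : ∀ i, i < m → s i * s i = 1) (k : ℕ) (hk : k ≤ m) :
    (Subgroup.closure (s '' {i | i < k}) : Set G).Finite := by
  induction k with
  | zero => simp
  | succ k ih =>
    have ih := ih (by omega)
    set H := Subgroup.closure (s '' {i | i < k}) with hH
    have hfin : (⋃ d ∈ Set.Iic (k + 1), (fun x => x * descWord s k d) '' (H : Set G)).Finite :=
      (Set.finite_Iic (k + 1)).biUnion fun d _ => ih.image _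
    refine hfin.subset ?_
    have hgen : ∀ i, i < k → s i ∈ H := fun i hi =>
      Subgroup.subset_closure ⟨i, hi, rfl⟩
    have key : ∀ d, d ≤ k + 1 → ∀ x ∈ H, ∀ i, i < k + 1 →
        ∃ d', d' ≤ k + 1 ∧ ∃ y ∈ H, y * descWord s k d' = x * descWord s k d * s i := by
      intro d hd x hx i hi
      rcases lt_trichotomy (i + d) k with h | h | h
      · refine ⟨d, hd, x * s i, H.mul_mem hx (hgen i (by omega)), ?_⟩
        rw [mul_assoc, mul_assoc, descWord_comm s m hcomm k (by omega) d i h]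
      · refine ⟨d + 1, by omega, x, hx, ?_⟩
        have : k - d = i := by omega
        rw [descWord, this, mul_assoc]
      · by_cases h' : i + d = k + 1
        · obtain ⟨e, rfl⟩ : ∃ e, d = e + 1 := ⟨d - 1, by omega⟩
          refine ⟨e, by omega, x, hx, ?_⟩
          have : k - e = i := by omega
          rw [descWord, this, mul_assoc, mul_assoc, hsq i (by omega), mul_one]
        · obtain ⟨j, rfl⟩ : ∃ j, i = j + 1 := ⟨i - 1, by omega⟩
          refine ⟨d, hd, x * s j, H.mul_mem hx (hgen j (by omega)), ?_⟩
          rw [mul_assoc, mul_assoc,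
            descWord_shift s m hbr hcomm k (by omega) j (by omega) d hd (by omega)]
    intro g hg
    have hg' : g ∈ Subgroup.closure (s '' {i | i < k + 1}) := hg
    have main : ∃ d, d ≤ k + 1 ∧ ∃ y ∈ H, y * descWord s k d = g := by
      induction hg' using Subgroup.closure_induction_right with
      | one => exact ⟨0, by omega, 1, H.one_mem, by simp [descWord]⟩
      | mul_right x hx y hy ih' =>
        obtain ⟨d, hd, z, hz, rfl⟩ := ih' hx
        obtain ⟨i, hi, rfl⟩ := hy
        exact key d hd z hz i hi
      | mul_inv_cancel x hx y hy ih' =>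
        obtain ⟨d, hd, z, hz, rfl⟩ := ih' hx
        obtain ⟨i, hi, rfl⟩ := hy
        rw [inv_eq_of_mul_eq_one_left (hsq i (by have : i < k + 1 := hi; omega))]
        exact key d hd z hz i hi
    obtain ⟨d, hd, y, hy, rfl⟩ := main
    exact Set.mem_biUnion (Set.mem_Iic.2 hd) ⟨y, hy, rfl⟩

theorem braid_rel (n : ℕ) (i j : Fin (n - 1)) (h : (i : ℕ) + 1 = j) :
    (PresentedGroup.of i * PresentedGroup.of j * PresentedGroup.of i : BraidGroup n) =
      PresentedGroup.of j * PresentedGroup.of i * PresentedGroup.of j :=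
  PresentedGroup.mk_eq_mk_of_mul_inv_mem (rels := braidRels (n - 1)) (Or.inl ⟨i, j, h, rfl⟩)

theorem comm_rel (n : ℕ) (i j : Fin (n - 1)) (h : (i : ℕ) + 2 ≤ j) :
    (PresentedGroup.of i * PresentedGroup.of j : BraidGroup n) =
      PresentedGroup.of j * PresentedGroup.of i :=
  PresentedGroup.mk_eq_mk_of_mul_inv_mem (rels := braidRels (n - 1)) (Or.inr ⟨i, j, h, rfl⟩)

theorem finite_range_of_sq {G : Type*} [Group G] (n : ℕ) (φ : BraidGroup n →* G)
    (h : ∀ i : Fin (n - 1), φ (PresentedGroup.of i) * φ (PresentedGroup.of i) = 1) :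
    Finite φ.range := by
  let s : ℕ → G := fun i => if hi : i < n - 1 then φ (PresentedGroup.of ⟨i, hi⟩) else 1
  have hs : ∀ i (hi : i < n - 1), s i = φ (PresentedGroup.of ⟨i, hi⟩) := fun i hi => dif_pos hi
  have hf := finite_closure_of_braid s (n - 1)
    (fun i hi => by
      rw [hs i (by omega), hs (i + 1) hi, ← map_mul, ← map_mul, ← map_mul, ← map_mul,
        braid_rel n _ _ rfl])
    (fun i j hij hj => by
      rw [hs i (by omega), hs j hj, ← map_mul, ← map_mul, comm_rel n _ _ hij])
    (fun i hi => by rw [hs i hi]; exact h _) (n - 1) le_rfl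
  refine (hf.subset ?_).to_subtype
  rintro _ ⟨g, rfl⟩
  have := PresentedGroup.generated_by (braidRels (n - 1))
    ((Subgroup.closure (s '' {i | i < n - 1})).comap φ)
    (fun j => Subgroup.subset_closure ⟨j, j.2, hs j j.2⟩) g
  exact this

/-- If one generator squares to one, they all do. -/
theorem sq_all {G : Type*} [Group G] (n : ℕ) (φ : BraidGroup n →* G) (hn : 0 < n - 1)
    (h : φ (PresentedGroup.of ⟨0, hn⟩) * φ (PresentedGroup.of ⟨0, hn⟩) = 1)
    (i : ℕ) (hi : i < n - 1) :
    φ (PresentedGroup.of ⟨i, hi⟩) * φ (PresentedGroup.of ⟨i, hi⟩) = 1 := by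
  induction i with
  | zero => exact h
  | succ i ih =>
    have ih := ih (by omega)
    have hb := congrArg φ (braid_rel n ⟨i, by omega⟩ ⟨i + 1, hi⟩ rfl)
    simp only [map_mul] at hb
    generalize φ (PresentedGroup.of ⟨i, by omega⟩) = a at *
    generalize φ (PresentedGroup.of ⟨i + 1, hi⟩) = b at *
    have hb' : b = (a * b) * a * (a * b)⁻¹ := by
      rw [hb]; group
    rw [hb']
    calc (a * b) * a * (a * b)⁻¹ * ((a * b) * a * (a * b)⁻¹)
        = (a * b) * (a * a) * (a * b)⁻¹ := by group
      _ = 1 := by rw [ih]; group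

/-- Maschke's theorem for a group acting through a finite quotient. -/
theorem exists_compl_of_finite_range {k E G : Type*} [Field k] [CharZero k] [AddCommGroup E]
    [Module k E] [Group G] (φ : G →* (E →ₗ[k] E)ˣ) [Finite φ.range] (W : Submodule k E)
    (hW : ∀ g : G, ∀ x ∈ W, ((φ g : (E →ₗ[k] E)ˣ) : E →ₗ[k] E) x ∈ W) :
    ∃ W' : Submodule k E, IsCompl W W' ∧
      ∀ g : G, ∀ x ∈ W', ((φ g : (E →ₗ[k] E)ˣ) : E →ₗ[k] E) x ∈ W' := by
  let ρ : Representation k φ.range E := (Units.coeHom (E →ₗ[k] E)).comp φ.range.subtype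
  have : NeZero (Nat.card φ.range : k) := ⟨by
    simpa using (Nat.card_pos (α := φ.range)).ne'⟩
  have hss : Representation.IsSemisimpleRepresentation ρ := inferInstance
  let w : Subrepresentation ρ := ⟨W, by
    rintro ⟨_, g, rfl⟩ v hv
    exact hW g v hv⟩
  obtain ⟨w', hw'⟩ := hss.exists_isCompl w
  refine ⟨w'.toSubmodule, ?_, fun g x hx => w'.apply_mem_toSubmodule ⟨φ g, g, rfl⟩ hx⟩
  constructor
  · rw [disjoint_iff]
    have := congrArg Subrepresentation.toSubmodule (disjoint_iff.1 hw'.1)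
    exact this
  · rw [codisjoint_iff]
    have := congrArg Subrepresentation.toSubmodule (codisjoint_iff.1 hw'.2)
    exact this

/-- Proposition "vsvide" (Ext part): if `B` and `C` are nonzero representations of
`B_n` factoring through `S_n` (every `σ_i²` acts trivially) and there is no nonzero
linear map `C → B` commuting with the actions of `σ_1` and `σ_3, …, σ_{n-1}`
(i.e. `Hom_{S_{2,n-2}}(C,B) = 0`), then every extension of `C` by `B` as
`B_n`-representations splits: `Ext_{B_n}(C,B) = 0`. -/
theorem ext_vanishing_of_hom_young_vanishing
    (n : ℕ) (hn : 2 ≤ n)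
    (k : Type*) [Field k] [CharZero k]
    (B : Type*) [AddCommGroup B] [Module k B] [FiniteDimensional k B] [Nontrivial B]
    (C : Type*) [AddCommGroup C] [Module k C] [FiniteDimensional k C] [Nontrivial C]
    (ρB : BraidGroup n →* (B →ₗ[k] B)ˣ)
    (ρC : BraidGroup n →* (C →ₗ[k] C)ˣ)
    (hB2 : ∀ i : Fin (n - 1), (ρB (PresentedGroup.of i)) ^ 2 = 1)
    (hC2 : ∀ i : Fin (n - 1), (ρC (PresentedGroup.of i)) ^ 2 = 1)
    (hhom : ∀ f : C →ₗ[k] B,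
      (∀ i : Fin (n - 1), (i : ℕ) ≠ 1 →
        ((ρB (PresentedGroup.of i) : (B →ₗ[k] B)ˣ) : B →ₗ[k] B) ∘ₗ f
          = f ∘ₗ ((ρC (PresentedGroup.of i) : (C →ₗ[k] C)ˣ) : C →ₗ[k] C)) →
      f = 0)
    (E : Type*) [AddCommGroup E] [Module k E] [FiniteDimensional k E]
    (ρE : BraidGroup n →* (E →ₗ[k] E)ˣ)
    (W : Submodule k E)
    (hW : ∀ g : BraidGroup n, ∀ x ∈ W, ((ρE g : (E →ₗ[k] E)ˣ) : E →ₗ[k] E) x ∈ W)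
    (hWB : ∃ e : W ≃ₗ[k] B, ∀ g : BraidGroup n, ∀ x : W,
      e ⟨((ρE g : (E →ₗ[k] E)ˣ) : E →ₗ[k] E) x, hW g x x.2⟩
        = ((ρB g : (B →ₗ[k] B)ˣ) : B →ₗ[k] B) (e x))
    (hQC : ∃ e : (E ⧸ W) ≃ₗ[k] C, ∀ g : BraidGroup n, ∀ x : E,
      e (Submodule.Quotient.mk (((ρE g : (E →ₗ[k] E)ˣ) : E →ₗ[k] E) x))
        = ((ρC g : (C →ₗ[k] C)ˣ) : C →ₗ[k] C) (e (Submodule.Quotient.mk x))) :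
    ∃ W' : Submodule k E, IsCompl W W' ∧
      ∀ g : BraidGroup n, ∀ x ∈ W', ((ρE g : (E →ₗ[k] E)ˣ) : E →ₗ[k] E) x ∈ W' := by
  obtain ⟨eB, heB⟩ := hWB
  obtain ⟨eC, heC⟩ := hQC
  have hn0 : 0 < n - 1 := by omega
  let o : BraidGroup n := PresentedGroup.of ⟨0, hn0⟩
  let N : E →ₗ[k] E := ((ρE (o * o) : (E →ₗ[k] E)ˣ) : E →ₗ[k] E) - LinearMap.id
  have hN : ∀ x, N x = ((ρE (o * o) : (E →ₗ[k] E)ˣ) : E →ₗ[k] E) x - x := fun x => rfl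
  have hBo : ρB (o * o) = 1 := by rw [map_mul, ← pow_two]; exact hB2 _
  have hCo : ρC (o * o) = 1 := by rw [map_mul, ← pow_two]; exact hC2 _
  have hNW : ∀ x, N x ∈ W := by
    intro x
    rw [hN, ← Submodule.Quotient.eq]
    apply eC.injective
    rw [heC, hCo]; rfl
  have hNker : ∀ x ∈ W, N x = 0 := by
    intro x hx
    have h1 := heB (o * o) ⟨x, hx⟩
    rw [hBo] at h1
    have h2 := eB.injective (h1.trans (show _ = eB ⟨x, hx⟩ from rfl))
    rw [hN, sub_eq_zero]
    exact congrArg Subtype.val h2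
  let N' : E →ₗ[k] W := N.codRestrict W hNW
  let f : C →ₗ[k] B := eB.toLinearMap ∘ₗ
    (W.liftQ N' (fun x hx => Subtype.ext (hNker x hx))) ∘ₗ eC.symm.toLinearMap
  have hf : ∀ x : E, f (eC (Submodule.Quotient.mk x)) = eB ⟨N x, hNW x⟩ := by
    intro x
    simp only [f, LinearMap.comp_apply, LinearEquiv.coe_coe, LinearEquiv.symm_apply_apply]
    rfl
  clear_value f
  have hcomm : ∀ i : Fin (n - 1), (i : ℕ) ≠ 1 →
      (PresentedGroup.of i : BraidGroup n) * (o * o) = (o * o) * PresentedGroup.of i := by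
    intro i hi
    have : (PresentedGroup.of i : BraidGroup n) * o = o * PresentedGroup.of i := by
      by_cases h0 : (i : ℕ) = 0
      · have : i = ⟨0, hn0⟩ := Fin.ext h0
        rw [this]
      · exact (comm_rel n ⟨0, hn0⟩ i (by simp only; omega)).symm
    rw [← mul_assoc, this, mul_assoc, this, mul_assoc]
  have hf0 : f = 0 := by
    apply hhom
    intro i hi
    ext c
    obtain ⟨q, rfl⟩ := eC.surjective c
    obtain ⟨x, rfl⟩ := Submodule.Quotient.mk_surjective W q
    rw [LinearMap.comp_apply, LinearMap.comp_apply, hf, ← heC, hf, ← heB]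
    congr 1
    apply Subtype.ext
    have h3 := congrArg (fun u => ((ρE u : (E →ₗ[k] E)ˣ) : E →ₗ[k] E) x) (hcomm i hi)
    simp only [map_mul ρE (PresentedGroup.of i), map_mul ρE (o * o), Units.val_mul,
      Module.End.mul_apply] at h3
    simp only [hN, map_sub, h3]
  have hN0 : ∀ x, N x = 0 := by
    intro x
    have h4 := hf x
    rw [hf0, LinearMap.zero_apply] at h4
    have h5 := (eB.map_eq_zero_iff).1 h4.symm
    exact congrArg Subtype.val h5
  have hsq : ρE o * ρE o = 1 := by
    rw [← map_mul]
    apply Units.ext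
    ext x
    have := hN0 x
    rw [hN, sub_eq_zero] at this
    exact this
  have : Finite ρE.range := finite_range_of_sq n ρE fun i => sq_all n ρE hn0 hsq i i.2
  exact exists_compl_of_finite_range ρE W hW
end

section
/- Let k be a field of characteristic 0, n ≥ 3, M a k-vector space, π : S_n → GL_k(M) a group homomorphism (S_n = Equiv.Perm (Fin n)), and t a family assigning to each pair (i, j) of distinct elements of Fin n an endomorphism t i j ∈ End_k(M) with t i j = t j i, satisfying the equivariance π(s) ∘ (t i j) ∘ π(s)⁻¹ = t (s i) (s j) for all s ∈ S_n, and the infinitesimal braid relations [t i j, t i k + t k j] = 0 for pairwise distinct i, j, k and [t i j, t k l] = 0 for pairwise distinct i, j, k, l. Assume: (a) Σ_{i<j} t i j ≠ 0; (b) the endomorphisms u_i := Σ_{j ≠ i} t i j (for i ∈ Fin n) are not all equal; (c) [t 0 1, t 1 2] ≠ 0. Then the family (t i j)_{i<j} of n(n−1)/2 endomorphisms of M is linearly independent over k. -/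
theorem exists_perm_three {α : Type*} [DecidableEq α] (i j l a b c : α)
    (hij : i ≠ j) (hil : i ≠ l) (hjl : j ≠ l) (hab : a ≠ b) (hac : a ≠ c) (hbc : b ≠ c) :
    ∃ s : Equiv.Perm α, s i = a ∧ s j = b ∧ s l = c := by
  obtain ⟨s1, h1⟩ : ∃ s : Equiv.Perm α, s i = a := ⟨Equiv.swap i a, by simp⟩
  obtain ⟨s2, h2, h2'⟩ : ∃ s : Equiv.Perm α, s i = a ∧ s j = b := by
    refine ⟨Equiv.swap (s1 j) b * s1, ?_, by simp⟩
    have : s1 i ≠ s1 j := s1.injective.ne hij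
    rw [Equiv.Perm.mul_apply, h1, Equiv.swap_apply_of_ne_of_ne (h1 ▸ this) hab]
  refine ⟨Equiv.swap (s2 l) c * s2, ?_, ?_, by simp⟩
  · have : s2 i ≠ s2 l := s2.injective.ne hil
    rw [Equiv.Perm.mul_apply, h2, Equiv.swap_apply_of_ne_of_ne (h2 ▸ this) hac]
  · have : s2 j ≠ s2 l := s2.injective.ne hjl
    rw [Equiv.Perm.mul_apply, h2', Equiv.swap_apply_of_ne_of_ne (h2' ▸ this) hbc]

section conj
variable {k M G : Type*} [CommSemiring k] [AddCommGroup M] [Module k M] [Group G]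
    (π : G →* (Module.End k M)ˣ) (s : G)

theorem conjAct_add' (x y : Module.End k M) :
    conjAct π s (x + y) = conjAct π s x + conjAct π s y := by
  simp only [conjAct, mul_add, add_mul]

theorem conjAct_sub' (x y : Module.End k M) :
    conjAct π s (x - y) = conjAct π s x - conjAct π s y := by
  simp only [conjAct, mul_sub, sub_mul]

theorem conjAct_smul' (r : k) (x : Module.End k M) :
    conjAct π s (r • x) = r • conjAct π s x := by
  simp only [conjAct, mul_smul_comm, smul_mul_assoc]

theorem conjAct_zero' : conjAct π s (0 : Module.End k M) = 0 := by
  simp [conjAct]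

theorem conjAct_sum' {ι : Type*} (S : Finset ι) (f : ι → Module.End k M) :
    conjAct π s (∑ i ∈ S, f i) = ∑ i ∈ S, conjAct π s (f i) := by
  simp only [conjAct, Finset.mul_sum, Finset.sum_mul]

theorem conjAct_mul' (x y : Module.End k M) :
    conjAct π s (x * y) = conjAct π s x * conjAct π s y := by
  simp only [conjAct, mul_assoc, Units.inv_mul_cancel_left]

theorem conjAct_lie' (x y : Module.End k M) :
    conjAct π s ⁅x, y⁆ = ⁅conjAct π s x, conjAct π s y⁆ := by
  simp only [Ring.lie_def, conjAct_sub', conjAct_mul']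
end conj

section main
variable {k : Type*} [Field k] [CharZero k] {n : ℕ} {M : Type*} [AddCommGroup M] [Module k M]

/-- Antisymmetrizing a relation by a transposition. -/
theorem relation_swap (π : Equiv.Perm (Fin n) →* (Module.End k M)ˣ)
    (T : Fin n → Fin n → Module.End k M)
    (hs : ∀ i j, T i j = T j i) (h0 : ∀ i, T i i = 0)
    (he : ∀ (s : Equiv.Perm (Fin n)) (i j : Fin n), conjAct π s (T i j) = T (s i) (s j))
    (c : Fin n → Fin n → k) (hcs : ∀ i j, c i j = c j i)
    (hc : ∑ p, ∑ q, c p q • T p q = 0) (i j : Fin n) (hij : i ≠ j) :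
    ∑ q, (if q = i ∨ q = j then 0 else c i q - c j q) • (T i q - T j q) = 0 := by
  set g : Fin n → k := fun q => if q = i ∨ q = j then 0 else c i q - c j q with hg
  set s := Equiv.swap i j with hsd
  have h1 : ∑ p, ∑ q, c (s p) (s q) • T p q = 0 := by
    have h := congrArg (conjAct π s) hc
    simp only [conjAct_sum', conjAct_smul', he, conjAct_zero'] at h
    rw [← Equiv.sum_comp s] at h
    rw [← h]
    refine Finset.sum_congr rfl fun p _ => ?_
    rw [← Equiv.sum_comp s]
    refine Finset.sum_congr rfl fun q _ => ?_
    simp [hsd]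
  let δ : Fin n → k := fun p => (if p = i then 1 else 0) - (if p = j then 1 else 0)
  have h2 : ∀ p q, (c p q - c (s p) (s q)) • T p q = (δ p * g q + g p * δ q) • T p q := by
    intro p q
    by_cases hpq : p = q
    · subst hpq; simp [h0]
    · congr 1
      simp only [hsd, δ, hg, Equiv.swap_apply_def]
      have := hcs p q
      have := hcs i j
      have := hcs i p
      have := hcs j p
      have := hcs i q
      have := hcs j q
      grind
  have h3 : ∑ p, ∑ q, (δ p * g q + g p * δ q) • T p q = 0 := by
    simp only [← h2, sub_smul, Finset.sum_sub_distrib, hc, h1, sub_zero]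
  have h4 : ∑ p, ∑ q, (δ p * g q) • T p q = ∑ q, g q • (T i q - T j q) := by
    rw [Finset.sum_comm]
    refine Finset.sum_congr rfl fun q _ => ?_
    simp only [δ, mul_comm _ (g q), mul_smul, ← Finset.smul_sum, sub_smul,
      Finset.sum_sub_distrib, ite_smul, one_smul, zero_smul]
    simp
  have h5 : ∑ p, ∑ q, (g p * δ q) • T p q = ∑ q, g q • (T i q - T j q) := by
    rw [← h4, Finset.sum_comm]
    refine Finset.sum_congr rfl fun q _ => Finset.sum_congr rfl fun p _ => ?_
    rw [hs, mul_comm]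
  simp only [add_smul, Finset.sum_add_distrib, h4, h5] at h3
  rw [← two_smul k] at h3
  exact (smul_eq_zero.mp h3).resolve_left two_ne_zero

theorem relation_swap_swap (π : Equiv.Perm (Fin n) →* (Module.End k M)ˣ)
    (T : Fin n → Fin n → Module.End k M)
    (he : ∀ (s : Equiv.Perm (Fin n)) (i j : Fin n), conjAct π s (T i j) = T (s i) (s j))
    (g : Fin n → k) (i j l r : Fin n) (hil : i ≠ l) (hir : i ≠ r) (hjl : j ≠ l) (hjr : j ≠ r)
    (hlr : l ≠ r)
    (hg : ∑ q, g q • (T i q - T j q) = 0) :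
    (g l - g r) • (T i l - T j l - (T i r - T j r)) = 0 := by
  set s := Equiv.swap l r with hsd
  have hsi : s i = i := Equiv.swap_apply_of_ne_of_ne hil hir
  have hsj : s j = j := Equiv.swap_apply_of_ne_of_ne hjl hjr
  have h1 : ∑ q, g (s q) • (T i q - T j q) = 0 := by
    have h := congrArg (conjAct π s) hg
    simp only [conjAct_sum', conjAct_smul', he, conjAct_zero', conjAct_sub', hsi, hsj] at h
    rw [← Equiv.sum_comp s] at h
    rw [← h]
    refine Finset.sum_congr rfl fun p _ => ?_
    simp [hsd]
  have h2 : ∀ q, g q - g (s q) =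
      (g l - g r) * ((if q = l then 1 else 0) - (if q = r then 1 else 0)) := by
    intro q
    simp only [hsd, Equiv.swap_apply_def]
    grind
  have h3 : ∑ q, (g q - g (s q)) • (T i q - T j q) = 0 := by
    simp only [sub_smul (g _), Finset.sum_sub_distrib, hg, h1, sub_zero]
  rw [← h3]
  simp only [h2, mul_smul, ← Finset.smul_sum]
  congr 1
  simp only [sub_smul, Finset.sum_sub_distrib, ite_smul, one_smul, zero_smul]
  simp

theorem bracket_zero (T : Fin n → Fin n → Module.End k M)
    (hs : ∀ i j, T i j = T j i)
    (hrel1 : ∀ i j l : Fin n, i ≠ j → i ≠ l → j ≠ l → ⁅T i j, T i l + T l j⁆ = 0)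
    (hrel2 : ∀ i j l r : Fin n, i ≠ j → i ≠ l → i ≠ r → j ≠ l → j ≠ r → l ≠ r →
      ⁅T i j, T l r⁆ = 0)
    (i j l r : Fin n) (hij : i ≠ j) (hil : i ≠ l) (hir : i ≠ r) (hjl : j ≠ l) (hjr : j ≠ r)
    (hlr : l ≠ r) (h : T i l - T j l - (T i r - T j r) = 0) :
    ⁅T i j, T j l⁆ = 0 := by
  have lie_add' : ∀ x y z : Module.End k M, ⁅x, y + z⁆ = ⁅x, y⁆ + ⁅x, z⁆ := by
    intro x y z
    simp only [Ring.lie_def, mul_add, add_mul]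
    abel
  have lie_sub' : ∀ x y z : Module.End k M, ⁅x, y - z⁆ = ⁅x, y⁆ - ⁅x, z⁆ := by
    intro x y z
    simp only [Ring.lie_def, mul_sub, sub_mul]
    abel
  have lie_zero' : ∀ x : Module.End k M, ⁅x, (0 : Module.End k M)⁆ = 0 := by
    intro x
    simp [Ring.lie_def]
  have lie_self' : ∀ x : Module.End k M, ⁅x, x⁆ = 0 := by
    intro x
    simp [Ring.lie_def]
  have key : ∀ a b c, a ≠ b → a ≠ c → b ≠ c → ⁅T a b, T b c⁆ = - ⁅T a b, T a c⁆ := by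
    intro a b c hab hac hbc
    have := hrel1 a b c hab hac hbc
    rw [lie_add', hs c b] at this
    exact eq_neg_of_add_eq_zero_right this
  have skew : ∀ a b c d, ⁅T a b, T c d⁆ = - ⁅T c d, T a b⁆ := by
    intro a b c d
    simp [Ring.lie_def]
  have e1 := congrArg (fun x => ⁅T i j, x⁆) h
  have e2 := congrArg (fun x => ⁅T i l, x⁆) h
  have e3 := congrArg (fun x => ⁅T i r, x⁆) h
  simp only [lie_sub', lie_zero', lie_self'] at e1 e2 e3
  rw [hrel2 i l j r hil hij hir hjl.symm hlr hjr] at e2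
  rw [hrel2 i r j l hir hij hil hjr.symm hlr.symm hjl] at e3
  -- brackets are expressed through x = [ij,il], y = [ij,ir], z = [il,ir]
  have k1 := key i j l hij hil hjl
  have k2 := key i j r hij hir hjr
  have k3 : ⁅T i l, T j l⁆ = ⁅T i j, T i l⁆ := by
    rw [hs j l, key i l j hil hij hjl.symm, ← skew]
  have k4 : ⁅T i r, T j r⁆ = ⁅T i j, T i r⁆ := by
    rw [hs j r, key i r j hir hij hjr.symm, ← skew]
  have k5 := skew i r i l
  rw [k1, k2] at e1
  rw [k3] at e2
  rw [k4, k5] at e3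
  rw [k1]
  generalize ⁅T i j, T i l⁆ = x at *
  generalize ⁅T i j, T i r⁆ = y at *
  generalize ⁅T i l, T i r⁆ = z at *
  have e4 : (4 : k) • x = 0 := by
    have : (4 : k) • x = (x - -x - (y - -y)) + (2 : k) • (-z - 0 - (0 - y))
        - (2 : k) • (0 - x - (z - 0)) := by module
    rw [this, e1, e2, e3]
    simp
  simpa using e4

theorem usum_of_const (T : Fin n → Fin n → Module.End k M)
    (hs : ∀ i j, T i j = T j i) (h0 : ∀ i, T i i = 0) (i j : Fin n) (hij : i ≠ j) (γ : k)
    (g : Fin n → k) (hgi : g i = 0) (hgj : g j = 0) (hγ : ∀ q, q ≠ i → q ≠ j → g q = γ)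
    (hg : ∑ q, g q • (T i q - T j q) = 0) : γ • (∑ q, T i q - ∑ q, T j q) = 0 := by
  have h1 : ∀ q, γ = g q + γ * ((if q = i then 1 else 0) + (if q = j then 1 else 0)) := by
    intro q
    grind
  rw [← Finset.sum_sub_distrib, Finset.smul_sum]
  rw [Finset.sum_congr rfl (fun q _ => congrArg (fun x => x • (T i q - T j q)) (h1 q))]
  simp only [add_smul, Finset.sum_add_distrib, hg, mul_smul, ← Finset.smul_sum, zero_add,
    ite_smul, one_smul, zero_smul]
  simp [h0, hs j i]

end main

/-- If a representation of the infinitesimal braid algebra `𝔅ₙ` does not factor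
through `B_n/Z(B_n)` (i.e. `Σ t_{ij} ≠ 0`), nor through Hurwitz's group (the `u_i`'s
are not all equal), nor through the enhanced symmetric group (`[t₀₁, t₁₂] ≠ 0`),
then the `t_{ij}` (for `i < j`) are linearly independent. -/
theorem infinitesimal_generators_linearIndependent
    (k : Type*) [Field k] [CharZero k]
    (n : ℕ) (hn : 3 ≤ n)
    (M : Type*) [AddCommGroup M] [Module k M]
    (π : Equiv.Perm (Fin n) →* (Module.End k M)ˣ)
    (t : Fin n → Fin n → Module.End k M)
    (hsymm : ∀ i j : Fin n, i ≠ j → t i j = t j i)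
    (hequiv : ∀ (s : Equiv.Perm (Fin n)) (i j : Fin n), i ≠ j →
      conjAct π s (t i j) = t (s i) (s j))
    (hrel1 : ∀ i j l : Fin n, i ≠ j → i ≠ l → j ≠ l → ⁅t i j, t i l + t l j⁆ = 0)
    (hrel2 : ∀ i j l r : Fin n, i ≠ j → i ≠ l → i ≠ r → j ≠ l → j ≠ r → l ≠ r →
      ⁅t i j, t l r⁆ = 0)
    (ha : ∑ p ∈ Finset.univ.filter (fun p : Fin n × Fin n => p.1 < p.2), t p.1 p.2 ≠ 0)
    (hb : ¬ ∀ i j : Fin n,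
      (∑ l ∈ Finset.univ.erase i, t i l) = ∑ l ∈ Finset.univ.erase j, t j l)
    (hc : ⁅t ⟨0, by omega⟩ ⟨1, by omega⟩, t ⟨1, by omega⟩ ⟨2, by omega⟩⁆ ≠ 0) :
    LinearIndependent k
      (fun p : {p : Fin n × Fin n // p.1 < p.2} => t p.1.1 p.1.2) := by
  classical
  let T : Fin n → Fin n → Module.End k M := fun i j => if i = j then 0 else t i j
  have Tt : ∀ i j, i ≠ j → T i j = t i j := fun i j h => if_neg h
  have h0 : ∀ i, T i i = 0 := fun i => if_pos rfl
  have hs : ∀ i j, T i j = T j i := by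
    intro i j
    by_cases h : i = j
    · rw [h]
    · rw [Tt _ _ h, Tt _ _ (Ne.symm h), hsymm _ _ h]
  have he : ∀ (s : Equiv.Perm (Fin n)) (i j : Fin n),
      conjAct π s (T i j) = T (s i) (s j) := by
    intro s i j
    by_cases h : i = j
    · rw [h, h0, h0, conjAct_zero']
    · rw [Tt _ _ h, Tt _ _ (s.injective.ne h), hequiv _ _ _ h]
  have hr1 : ∀ i j l : Fin n, i ≠ j → i ≠ l → j ≠ l → ⁅T i j, T i l + T l j⁆ = 0 := by
    intro i j l h1 h2 h3
    rw [Tt _ _ h1, Tt _ _ h2, Tt _ _ h3.symm]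
    exact hrel1 i j l h1 h2 h3
  have hr2 : ∀ i j l r : Fin n, i ≠ j → i ≠ l → i ≠ r → j ≠ l → j ≠ r → l ≠ r →
      ⁅T i j, T l r⁆ = 0 := by
    intro i j l r h1 h2 h3 h4 h5 h6
    rw [Tt _ _ h1, Tt _ _ h6]
    exact hrel2 i j l r h1 h2 h3 h4 h5 h6
  have hu : ∀ i, ∑ l ∈ Finset.univ.erase i, t i l = ∑ l, T i l := by
    intro i
    rw [← Finset.sum_erase Finset.univ (h0 i)]
    exact Finset.sum_congr rfl fun l hl => (Tt _ _ (Finset.ne_of_mem_erase hl).symm).symm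
  simp only [hu] at hb
  -- the three kinds of vanishing are impossible
  have noB : ∀ i j l r : Fin n, i ≠ j → i ≠ l → i ≠ r → j ≠ l → j ≠ r → l ≠ r →
      T i l - T j l - (T i r - T j r) ≠ 0 := by
    intro i j l r h1 h2 h3 h4 h5 h6 h
    have hz := bracket_zero T hs hr1 hr2 i j l r h1 h2 h3 h4 h5 h6 h
    obtain ⟨s, s1, s2, s3⟩ := exists_perm_three i j l (⟨0, by omega⟩ : Fin n) ⟨1, by omega⟩
      ⟨2, by omega⟩ h1 h2 h4 (by simp) (by simp) (by simp)
    have := congrArg (conjAct π s) hz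
    rw [conjAct_lie', he, he, conjAct_zero', s1, s2, s3, Tt _ _ (by simp), Tt _ _ (by simp)] at this
    exact hc this
  have noU : ∀ i j, i ≠ j → ∑ q, T i q - ∑ q, T j q ≠ 0 := by
    intro i j hij h
    have hall : ∀ q, ∑ l, T i l = ∑ l, T q l := by
      intro q
      by_cases hq : i = q
      · rw [hq]
      · have h' := congrArg (conjAct π (Equiv.swap j q)) (sub_eq_zero.mp h)
        simp only [conjAct_sum', he] at h'
        rw [Equiv.swap_apply_of_ne_of_ne hij hq, Equiv.swap_apply_left] at h'
        rwa [Equiv.sum_comp (Equiv.swap j q) (fun x => T i x),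
          Equiv.sum_comp (Equiv.swap j q) (fun x => T q x)] at h'
    exact hb fun p q => (hall p).symm.trans (hall q)
  rw [Fintype.linearIndependent_iff]
  intro a hrelA
  -- extend the coefficients symmetrically
  let b : Fin n → Fin n → k := fun i j => if h : i < j then a ⟨(i, j), h⟩ else 0
  have hbz : ∀ i j, ¬ i < j → b i j = 0 := fun i j h => dif_neg h
  let c : Fin n → Fin n → k := fun i j => b i j + b j i
  have hcs : ∀ i j, c i j = c j i := fun i j => add_comm _ _
  have hbsum : ∑ p, ∑ q, b p q • T p q = 0 := by
    rw [← Fintype.sum_prod_type' (f := fun p q => b p q • T p q), ← hrelA]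
    have e : ∀ x : {p : Fin n × Fin n // p.1 < p.2},
        a x • t x.1.1 x.1.2 = b x.1.1 x.1.2 • T x.1.1 x.1.2 := by
      rintro ⟨⟨p, q⟩, h⟩
      have h : p < q := h
      simp [b, h, Tt p q h.ne]
    rw [Finset.sum_congr rfl fun x _ => e x]
    rw [← Finset.sum_subtype (Finset.univ.filter (fun p : Fin n × Fin n => p.1 < p.2))
      (by simp) (fun x => b x.1 x.2 • T x.1 x.2), Finset.sum_filter]
    refine Finset.sum_congr rfl fun x _ => ?_
    split_ifs with h
    · rfl
    · rw [hbz _ _ h, zero_smul]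
  have hcsum : ∑ p, ∑ q, c p q • T p q = 0 := by
    simp only [c, add_smul, Finset.sum_add_distrib, hbsum, zero_add]
    rw [Finset.sum_comm, ← hbsum]
    exact Finset.sum_congr rfl fun p _ => Finset.sum_congr rfl fun q _ => by rw [hs]
  have hconst : ∀ i j l, i ≠ j → i ≠ l → j ≠ l → c i l = c j l := by
    intro i j l hij hil hjl
    have hg := relation_swap π T hs h0 he c hcs hcsum i j hij
    set g : Fin n → k := fun q => if q = i ∨ q = j then 0 else c i q - c j q with hgd
    have hgl : ∀ q, q ≠ i → q ≠ j → g q = c i q - c j q := by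
      intro q h1 h2
      simp [hgd, h1, h2]
    have hcon : ∀ q, q ≠ i → q ≠ j → g q = g l := by
      intro q h1 h2
      by_cases hq : q = l
      · rw [hq]
      · have := relation_swap_swap π T he g i j q l h1.symm hil h2.symm hjl hq hg
        exact sub_eq_zero.mp ((smul_eq_zero.mp this).resolve_right
          (noB i j q l hij h1.symm hil h2.symm hjl hq))
    have := usum_of_const T hs h0 i j hij (g l) g (by simp [hgd]) (by simp [hgd]) hcon hg
    have := (smul_eq_zero.mp this).resolve_right (noU i j hij)
    rw [hgl l hil.symm hjl.symm] at this
    exact sub_eq_zero.mp this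
  have hconst2 : ∀ i j p q, i ≠ j → p ≠ q → c i j = c p q := by
    intro i j p q hij hpq
    have := hconst
    by_cases h1 : i = q
    · subst h1
      by_cases h2 : j = p
      · subst h2; exact hcs _ _
      · rw [hcs i j]; exact hconst j p i h2 hij.symm hpq
    · have e1 : c i j = c i q := by
        by_cases h3 : j = q
        · rw [h3]
        · rw [hcs i j, hcs i q]; exact hconst j q i h3 hij.symm (Ne.symm h1)
      rw [e1]
      by_cases h4 : i = p
      · rw [h4]
      · exact hconst i p q h4 h1 hpq
  have hac : ∀ p : {p : Fin n × Fin n // p.1 < p.2}, a p = c p.1.1 p.1.2 := by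
    rintro ⟨⟨p, q⟩, h⟩
    have h : p < q := h
    have : ¬ q < p := not_lt.mpr h.le
    simp [c, b, h, this]
  intro p
  have h1 : ∑ x : {p : Fin n × Fin n // p.1 < p.2}, a p • t x.1.1 x.1.2 = 0 := by
    rw [← hrelA]
    refine Finset.sum_congr rfl fun x _ => ?_
    rw [hac p, hac x, hconst2 _ _ _ _ p.2.ne x.2.ne]
  rw [← Finset.smul_sum] at h1
  refine (smul_eq_zero.mp h1).resolve_right fun h2 => ha ?_
  rw [← h2]
  exact Finset.sum_subtype _ (by simp) _
end

section
/- Let k be a field of characteristic 0, 𝔤 a Lie algebra over k, and M a finite-dimensional k-vector space equipped with a Lie module structure over 𝔤. Let G be a finite group, σ : G → Aut(𝔤) an action of G on 𝔤 by Lie algebra automorphisms, and π : G → GL_k(M) a group homomorphism satisfying π(g)(x • m) = (σ(g) x) • (π(g) m) for all g ∈ G, x ∈ 𝔤, m ∈ M (so that M is a module over the semidirect product kG ⋉ U𝔤). Then M is a semisimple 𝔤-module — every Lie submodule of M admits a complementary Lie submodule — if and only if every Lie submodule N of M with π(g)(N) = N for all g ∈ G admits a complementary Lie submodule N' with π(g)(N')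 = N' for all g ∈ G (i.e. M is semisimple as a kG ⋉ U𝔤-module). -/
/-- Pull back a Lie submodule along a semilinear map. -/
def LieSubmodule.twist {k 𝔤 M : Type*} [Field k] [LieRing 𝔤] [LieAlgebra k 𝔤]
    [AddCommGroup M] [Module k M] [LieRingModule 𝔤 M]
    (s : 𝔤 →ₗ[k] 𝔤) (p : M →ₗ[k] M) (h : ∀ x m, p ⁅x, m⁆ = ⁅s x, p m⁆)
    (N : LieSubmodule k 𝔤 M) : LieSubmodule k 𝔤 M :=
  { N.toSubmodule.comap p with
    lie_mem := by
      intro x m hm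
      change p ⁅x, m⁆ ∈ N
      rw [h]
      exact N.lie_mem hm }


/-- Lemma "restrss": let a finite group `G` act on a Lie algebra `𝔤` by automorphisms
and let `M` be a module over the semidirect product `kG ⋉ U𝔤`, i.e. a Lie module over
`𝔤` with a compatible linear `G`-action. Then `M` is semisimple as a `𝔤`-module
(every Lie submodule has a complement) if and only if it is semisimple as a
`kG ⋉ U𝔤`-module (every `G`-stable Lie submodule has a `G`-stable complement). -/
theorem semisimple_restriction_iff
    (k : Type*) [Field k] [CharZero k]
    (𝔤 : Type*) [LieRing 𝔤] [LieAlgebra k 𝔤]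
    (M : Type*) [AddCommGroup M] [Module k M] [LieRingModule 𝔤 M] [LieModule k 𝔤 M]
    [FiniteDimensional k M]
    (G : Type*) [Group G] [Finite G]
    (σ : G →* (𝔤 →ₗ[k] 𝔤)ˣ)
    (hσ : ∀ (g : G) (x y : 𝔤),
      ((σ g : (𝔤 →ₗ[k] 𝔤)ˣ) : 𝔤 →ₗ[k] 𝔤) ⁅x, y⁆
        = ⁅((σ g : (𝔤 →ₗ[k] 𝔤)ˣ) : 𝔤 →ₗ[k] 𝔤) x,
           ((σ g : (𝔤 →ₗ[k] 𝔤)ˣ) : 𝔤 →ₗ[k] 𝔤) y⁆)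
    (π : G →* (M →ₗ[k] M)ˣ)
    (hcompat : ∀ (g : G) (x : 𝔤) (m : M),
      ((π g : (M →ₗ[k] M)ˣ) : M →ₗ[k] M) ⁅x, m⁆
        = ⁅((σ g : (𝔤 →ₗ[k] 𝔤)ˣ) : 𝔤 →ₗ[k] 𝔤) x,
           ((π g : (M →ₗ[k] M)ˣ) : M →ₗ[k] M) m⁆) :
    (∀ N : LieSubmodule k 𝔤 M, ∃ N' : LieSubmodule k 𝔤 M, IsCompl N N') ↔
    (∀ N : LieSubmodule k 𝔤 M,
      (∀ g : G, ∀ m ∈ N, ((π g : (M →ₗ[k] M)ˣ) : M →ₗ[k] M) m ∈ N) →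
      ∃ N' : LieSubmodule k 𝔤 M,
        (∀ g : G, ∀ m ∈ N', ((π g : (M →ₗ[k] M)ˣ) : M →ₗ[k] M) m ∈ N') ∧
        IsCompl N N') := by
  have hinv : ∀ (g : G) (m : M), (π g : M →ₗ[k] M) ((π g⁻¹ : (M →ₗ[k] M)ˣ).1 m) = m := by
    intro g m
    rw [← Module.End.mul_apply, ← Units.val_mul, ← map_mul]; simp
  have hinv2 : ∀ (g : G) (m : M), (π g⁻¹ : (M →ₗ[k] M)ˣ).1 ((π g : M →ₗ[k] M) m) = m := by
    intro g m
    rw [← Module.End.mul_apply, ← Units.val_mul, ← map_mul]; simp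
  have sinv : ∀ (g : G) (m : 𝔤), (σ g : 𝔤 →ₗ[k] 𝔤) ((σ g⁻¹ : (𝔤 →ₗ[k] 𝔤)ˣ).1 m) = m := by
    intro g m
    rw [← Module.End.mul_apply, ← Units.val_mul, ← map_mul]; simp
  constructor
  · intro H N hN
    obtain ⟨N', hN'⟩ := H N
    have hc : IsCompl N.toSubmodule N'.toSubmodule := by
      simpa using hN'
    let p : M →ₗ[k] M := Submodule.projection _ _ hc
    have hpN : ∀ m, p m ∈ N := fun m => Submodule.projection_apply_mem hc m
    have hpid : ∀ m ∈ N, p m = m := fun m hm =>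
      Submodule.projection_apply_left hc ⟨m, hm⟩
    have hp0 : ∀ m ∈ N', p m = 0 := fun m hm =>
      (Submodule.projection_apply_eq_zero_iff hc).2 hm
    have hpl : ∀ (x : 𝔤) m, p ⁅x, m⁆ = ⁅x, p m⁆ := by
      intro x m
      obtain ⟨a, ha, b, hb, rfl⟩ := Submodule.mem_sup.1
        (show m ∈ N.toSubmodule ⊔ N'.toSubmodule by rw [hc.sup_eq_top]; trivial)
      rw [lie_add, map_add, map_add, hpid a ha, hp0 b hb, hpid _ (N.lie_mem ha),
        hp0 _ (N'.lie_mem hb), add_zero, add_zero]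
    haveI := Fintype.ofFinite G
    let P : M →ₗ[k] M := ∑ g : G, (π g : M →ₗ[k] M) ∘ₗ p ∘ₗ (π g⁻¹ : (M →ₗ[k] M)ˣ).1
    have hP : ∀ m, P m = ∑ g : G, (π g : M →ₗ[k] M) (p ((π g⁻¹ : (M →ₗ[k] M)ˣ).1 m)) := by
      intro m; simp [P, LinearMap.sum_apply]
    have hPN : ∀ m, P m ∈ N := by
      intro m
      rw [hP]
      exact sum_mem fun g _ => hN g _ (hpN _)
    have hPid : ∀ m ∈ N, P m = (Fintype.card G : k) • m := by
      intro m hm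
      rw [hP, Finset.sum_congr rfl (g := fun _ => m)]
      · simp [Nat.cast_smul_eq_nsmul]
      · intro g _
        rw [hpid _ (hN _ _ hm), hinv]
    have hPl : ∀ (x : 𝔤) m, P ⁅x, m⁆ = ⁅x, P m⁆ := by
      intro x m
      rw [hP, hP, lie_sum]
      refine Finset.sum_congr rfl fun g _ => ?_
      rw [hcompat, hpl, hcompat, sinv]
    have hPg : ∀ (h : G) m, P ((π h : M →ₗ[k] M) m) = (π h : M →ₗ[k] M) (P m) := by
      intro h m
      rw [hP, hP, map_sum]
      symm
      refine Fintype.sum_equiv (Equiv.mulLeft h) _ _ fun g => ?_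
      simp [map_mul, Module.End.mul_apply, ← map_inv, hinv2]
    have hcard : (Fintype.card G : k) ≠ 0 := by
      exact_mod_cast Fintype.card_ne_zero
    refine ⟨{ LinearMap.ker P with
      lie_mem := ?_ }, ?_, ?_⟩
    · intro x m hm
      change P m = 0 at hm
      change P ⁅x, m⁆ = 0
      rw [hPl, hm, lie_zero]
    · intro g m hm
      change P m = 0 at hm
      change P _ = 0
      rw [hPg, hm, map_zero]
    · rw [← LieSubmodule.isCompl_toSubmodule]
      change IsCompl N.toSubmodule (LinearMap.ker P)
      constructor
      · rw [Submodule.disjoint_def]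
        intro m hm h0
        have h1 : P m = 0 := h0
        rw [hPid m hm] at h1
        exact (smul_eq_zero.1 h1).resolve_left hcard
      · rw [codisjoint_iff, eq_top_iff]
        intro m _
        refine Submodule.mem_sup.2 ⟨(Fintype.card G : k)⁻¹ • P m,
          N.toSubmodule.smul_mem _ (hPN m), m - (Fintype.card G : k)⁻¹ • P m, ?_, by abel⟩
        rw [LinearMap.mem_ker, map_sub, map_smul, hPid _ (hPN m), smul_smul,
          inv_mul_cancel₀ hcard, one_smul, sub_self]
  · intro H
    let T : G → LieSubmodule k 𝔤 M ≃o LieSubmodule k 𝔤 M := fun g =>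
      { toFun := LieSubmodule.twist _ _ (hcompat g)
        invFun := LieSubmodule.twist _ _ (hcompat g⁻¹)
        left_inv := by
          intro N; ext m
          change (π g : M →ₗ[k] M) ((π g⁻¹ : (M →ₗ[k] M)ˣ).1 m) ∈ N ↔ _
          rw [hinv]
        right_inv := by
          intro N; ext m
          change (π g⁻¹ : (M →ₗ[k] M)ˣ).1 ((π g : M →ₗ[k] M) m) ∈ N ↔ _
          rw [hinv2]
        map_rel_iff' := by
          intro A B
          constructor
          · intro h m hm
            have := @h ((π g⁻¹ : (M →ₗ[k] M)ˣ).1 m)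
              (show (π g : M →ₗ[k] M) ((π g⁻¹ : (M →ₗ[k] M)ˣ).1 m) ∈ A by rwa [hinv])
            have h2 : (π g : M →ₗ[k] M) ((π g⁻¹ : (M →ₗ[k] M)ˣ).1 m) ∈ B := this
            rwa [hinv] at h2
          · intro h m hm
            exact h hm }
    let S : LieSubmodule k 𝔤 M := sSup {a | IsAtom a}
    have hS : ∀ g : G, S ≤ T g S := by
      intro g
      refine sSup_le fun a ha => ?_
      rw [← OrderIso.symm_apply_le]
      exact le_sSup (((T g).symm.isAtom_iff a).2 ha)
    obtain ⟨S', -, hS'⟩ := H S (fun g m hm => hS g hm)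
    have hbot : S' = ⊥ := by
      rcases IsAtomic.eq_bot_or_exists_atom_le S' with h | ⟨a, ha, haS⟩
      · exact h
      · exact absurd (le_bot_iff.1 (hS'.disjoint (le_sSup ha) haS)) ha.1
    have htop : S = ⊤ := by
      have := hS'.sup_eq_top
      rwa [hbot, sup_bot_eq] at this
    have := complementedLattice_of_sSup_atoms_eq_top htop
    exact fun N => exists_isCompl N
end

section
/- Let k be a field of characteristic 0 and V a finite-dimensional k-vector space. Let s, t ∈ End_k(V) satisfy: s ∘ s = id; s ∘ t = t ∘ s; V admits a basis of eigenvectors of t, and the finite set of eigenvalues of t, regarded inside k viewed as a ℚ-vector space, is affinely independent over ℚ (the eigenvalues form a simplex); and s belongs to the k-subalgebra of End_k(V) generated by t. Then for all natural numbers p and q, on the space W = (⊗^p V) ⊗ (⊗^q V*) — the p-th tensor power of V tensored with the q-th tensor power of the dual space V*, all over k — the endomorphism S = (s^{⊗p}) ⊗ ((s*)^{⊗q}), where s* : V* → V* is the dual (transpose) map of s and s^{⊗p} acts by s on every tensor factor, belongs to the k-subalgebra of End_k(W) generated by the single endomorphism T = (Σ_{i=1}^{p} t_{(i)}) ⊗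 id + id ⊗ (Σ_{j=1}^{q} (−t*)_{(j)}), where t_{(i)} denotes t acting on the i-th factor of ⊗^p V and the identity on all other factors, and (−t*)_{(j)} denotes −t* acting on the j-th factor of ⊗^q V* and the identity on all other factors. (Every derived representation ρ^{⊗p} ⊗ (ρ^∨)^{⊗q} of a simplicial, essentially pure representation of 𝔅₂ is again essentially pure.) -/
open scoped TensorProduct

lemma aux_multiset_eq {k E : Type*} [Field k] [CharZero k] (v : E → k)
    (h : AffineIndependent ℚ v) (A B : Multiset E) (hc : A.card = B.card)
    (hsum : (A.map v).sum = (B.map v).sum) : A = B := by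
  classical
  have key := affineIndependent_iff.mp h (A + B).toFinset
    (fun e => (A.count e : ℚ) - (B.count e : ℚ)) ?_ ?_
  · ext e
    by_cases he : e ∈ (A + B).toFinset
    · have := key e he
      exact_mod_cast sub_eq_zero.mp this
    · simp only [Multiset.toFinset_add, Finset.mem_union, Multiset.mem_toFinset, not_or] at he
      rw [Multiset.count_eq_zero_of_notMem he.1, Multiset.count_eq_zero_of_notMem he.2]
  · rw [Finset.sum_sub_distrib, sub_eq_zero, ← Nat.cast_sum, ← Nat.cast_sum,
      Multiset.sum_count_eq_card, Multiset.sum_count_eq_card, hc]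
    · intro a ha; simp [ha]
    · intro a ha; simp [ha]
  · have hm : ∀ C : Multiset E, C.toFinset ⊆ (A + B).toFinset →
        ∑ e ∈ (A + B).toFinset, (C.count e : ℚ) • v e = (C.map v).sum := by
      intro C hC
      rw [Finset.sum_multiset_map_count]
      symm
      rw [Finset.sum_subset hC]
      · refine Finset.sum_congr rfl fun x _ => ?_
        rw [Nat.cast_smul_eq_nsmul]
      · intro x _ hx
        rw [Multiset.count_eq_zero_of_notMem (by simpa using hx), zero_smul]
    simp only [sub_smul]
    rw [Finset.sum_sub_distrib, hm A (by simp), hm B (by simp), hsum, sub_self]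

lemma aux_adjoin {k W J : Type*} [Field k] [AddCommGroup W] [Module k W] [Finite J]
    (B : Module.Basis J k W) (S T : Module.End k W) (a c : J → k)
    (hT : ∀ j, T (B j) = a j • B j) (hS : ∀ j, S (B j) = c j • B j)
    (h : ∀ i j, a i = a j → c i = c j) : S ∈ Algebra.adjoin k ({T} : Set (Module.End k W)) := by
  classical
  have := Fintype.ofFinite J
  let g : k → k := Function.extend a c 0
  have hg : ∀ j, g (a j) = c j := fun j =>
    Function.FactorsThrough.extend_apply (fun x y hxy => h x y hxy) 0 j
  let P := Lagrange.interpolate (Finset.univ.image a) id g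
  have hP : ∀ j, P.eval (a j) = c j := fun j => by
    rw [← hg]
    exact Lagrange.eval_interpolate_at_node (v := id) (i := a j) g (Function.injective_id.injOn)
      (by simp)
  have : S = Polynomial.aeval T P := by
    refine B.ext fun j => ?_
    rw [hS, Module.End.aeval_apply_of_mem_apply_eq_smul (hT j), hP]
  rw [this]
  exact Polynomial.aeval_mem_adjoin_singleton k T

lemma aux_map_prod {k V : Type*} [Field k] [AddCommGroup V] [Module k V] {p : ℕ}
    (f : Module.End k V) (x : Fin p → V) (c : Fin p → k) (h : ∀ i, f (x i) = c i • x i) :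
    PiTensorProduct.map (fun _ : Fin p => (f : V →ₗ[k] V)) (PiTensorProduct.tprod k x)
      = (∏ i, c i) • PiTensorProduct.tprod k x := by
  rw [PiTensorProduct.map_tprod, ← MultilinearMap.map_smul_univ]
  simp only [h]

lemma aux_map_sum {k V : Type*} [Field k] [AddCommGroup V] [Module k V] {p : ℕ}
    (f : Module.End k V) (x : Fin p → V) (c : Fin p → k) (h : ∀ i, f (x i) = c i • x i) :
    (∑ i : Fin p, PiTensorProduct.map
      (Function.update (fun _ : Fin p => (LinearMap.id : V →ₗ[k] V)) i f))
        (PiTensorProduct.tprod k x)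
      = (∑ i, c i) • PiTensorProduct.tprod k x := by
  rw [LinearMap.sum_apply, Finset.sum_smul]
  refine Finset.sum_congr rfl fun i _ => ?_
  rw [PiTensorProduct.map_tprod]
  have : (fun j => (Function.update (fun _ : Fin p => (LinearMap.id : V →ₗ[k] V)) i f) j (x j))
      = Function.update x i (c i • x i) := by
    ext j
    by_cases hj : j = i
    · subst hj; simp [h]
    · simp [hj]
  rw [this, MultilinearMap.map_update_smul, Function.update_eq_self]

lemma aux_dual {k V ι : Type*} [Field k] [AddCommGroup V] [Module k V] [Finite ι] [DecidableEq ι]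
    (b : Module.Basis ι k V) (f : Module.End k V) (c : ι → k) (h : ∀ i, f (b i) = c i • b i)
    (i : ι) : (f : V →ₗ[k] V).dualMap (b.dualBasis i) = c i • b.dualBasis i := by
  refine b.ext fun j => ?_
  simp only [LinearMap.dualMap_apply, LinearMap.smul_apply, h, map_smul,
    Module.Basis.dualBasis_apply_self]
  by_cases hij : j = i
  · subst hij; rfl
  · simp [hij]

lemma aux_main {k : Type*} [Field k] [CharZero k]
    {V : Type*} [AddCommGroup V] [Module k V] [FiniteDimensional k V]
    (s t : Module.End k V)
    (hs : s * s = 1)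
    (haff : AffineIndependent ℚ
      (fun μ : {μ : k // Module.End.HasEigenvalue t μ} => (μ : k)))
    (P : Polynomial k) (hP : Polynomial.aeval t P = s)
    {ι : Type*} (b : Module.Basis ι k V) (m : ι → k) (hb : ∀ i, t (b i) = m i • b i)
    (p q : ℕ) :
    TensorProduct.map
        (PiTensorProduct.map fun _ : Fin p => (s : V →ₗ[k] V))
        (PiTensorProduct.map fun _ : Fin q => (s : V →ₗ[k] V).dualMap)
      ∈ Algebra.adjoin k
        ({ TensorProduct.map
            (∑ i : Fin p, PiTensorProduct.map
              (Function.update (fun _ : Fin p => (LinearMap.id : V →ₗ[k] V)) i t))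
            LinearMap.id
          + TensorProduct.map LinearMap.id
            (∑ j : Fin q, PiTensorProduct.map
              (Function.update
                (fun _ : Fin q =>
                  (LinearMap.id : Module.Dual k V →ₗ[k] Module.Dual k V))
                j (-(t : V →ₗ[k] V).dualMap))) } :
          Set (Module.End k
            ((⨂[k] _ : Fin p, V) ⊗[k] (⨂[k] _ : Fin q, Module.Dual k V)))) := by
  classical
  have hfin : Finite ι := Module.Finite.finite_basis b
  have hsb : ∀ i, s (b i) = P.eval (m i) • b i := fun i => by
    rw [← hP]
    exact Module.End.aeval_apply_of_mem_apply_eq_smul (hb i)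
  have hsq : ∀ i, P.eval (m i) * P.eval (m i) = 1 := fun i => by
    have h1 : (s * s) (b i) = b i := by rw [hs]; rfl
    rw [Module.End.mul_apply, hsb, map_smul, hsb, smul_smul] at h1
    exact smul_left_injective k (b.ne_zero i) (by simpa using h1)
  have hev : ∀ i, Module.End.HasEigenvalue t (m i) := fun i =>
    Module.End.hasEigenvalue_of_hasEigenvector
      ⟨Module.End.mem_eigenspace_iff.mpr (hb i), b.ne_zero i⟩
  refine aux_adjoin
    ((Basis.piTensorProduct fun _ : Fin p => b).tensorProduct
      (Basis.piTensorProduct fun _ : Fin q => b.dualBasis)) _ _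
    (fun j => (∑ i, m (j.1 i)) + ∑ i, -m (j.2 i))
    (fun j => (∏ i, P.eval (m (j.1 i))) * ∏ i, P.eval (m (j.2 i))) ?_ ?_ ?_
  · rintro ⟨x, y⟩
    rw [Module.Basis.tensorProduct_apply, Basis.piTensorProduct_apply,
      Basis.piTensorProduct_apply, LinearMap.add_apply, TensorProduct.map_tmul,
      TensorProduct.map_tmul, aux_map_sum t _ (fun i => m (x i)) (fun i => hb _),
      aux_map_sum (-(t : V →ₗ[k] V).dualMap) _ (fun i => -m (y i))
        (fun i => by rw [LinearMap.neg_apply, aux_dual b t m hb, neg_smul])]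
    simp only [LinearMap.id_apply, TensorProduct.smul_tmul', TensorProduct.tmul_smul, add_smul]
  · rintro ⟨x, y⟩
    rw [Module.Basis.tensorProduct_apply, Basis.piTensorProduct_apply,
      Basis.piTensorProduct_apply, TensorProduct.map_tmul,
      aux_map_prod s _ (fun i => P.eval (m (x i))) (fun i => hsb _),
      aux_map_prod (s : V →ₗ[k] V).dualMap _ (fun i => P.eval (m (y i)))
        (fun i => aux_dual b s _ hsb _)]
    rw [TensorProduct.smul_tmul_smul]
  · rintro ⟨x, y⟩ ⟨x', y'⟩ h
    simp only [Finset.sum_neg_distrib] at h ⊢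
    let e : ι → {μ : k // Module.End.HasEigenvalue t μ} := fun i => ⟨m i, hev i⟩
    have hAB := aux_multiset_eq _ haff
      (Finset.univ.val.map (fun i => e (x i)) + Finset.univ.val.map (fun i => e (y' i)))
      (Finset.univ.val.map (fun i => e (x' i)) + Finset.univ.val.map (fun i => e (y i)))
      (by simp) (by
        simp only [Multiset.map_add, Multiset.sum_add, Multiset.map_map, Function.comp_def]
        change (∑ i, m (x i)) + (∑ i, m (y' i)) = (∑ i, m (x' i)) + (∑ i, m (y i))
        linear_combination h)
    have hprod := congrArg (fun A => (A.map (fun μ => P.eval μ.1)).prod) hAB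
    simp only [Multiset.map_add, Multiset.prod_add, Multiset.map_map, Function.comp_def] at hprod
    change (∏ i, P.eval (m (x i))) * (∏ i, P.eval (m (y' i)))
      = (∏ i, P.eval (m (x' i))) * (∏ i, P.eval (m (y i))) at hprod
    have hq : ∀ z : Fin q → ι, (∏ i, P.eval (m (z i))) * (∏ i, P.eval (m (z i))) = 1 := by
      intro z
      rw [← Finset.prod_mul_distrib]
      exact Finset.prod_eq_one fun i _ => hsq _
    have h1 := hq y
    have h2 := hq y'
    generalize (∏ i, P.eval (m (x i))) = X at *
    generalize (∏ i, P.eval (m (x' i))) = X' at *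
    generalize (∏ i, P.eval (m (y i))) = Y at *
    generalize (∏ i, P.eval (m (y' i))) = Y' at *
    linear_combination Y * Y' * hprod - X * Y * h2 + X' * Y' * h1

/-- Proposition "simplpure": let `(s, t)` be a simplicial and essentially pure
representation of `𝔅₂` on a finite-dimensional space `V`: `s² = 1`, `st = ts`,
`t` is diagonalizable with eigenvalues forming a simplex over `ℚ` (affinely
independent), and `s` is a polynomial in `t`. Then every derived representation
`ρ^{⊗p} ⊗ (ρ^∨)^{⊗q}` is essentially pure: the operator
`S = s^{⊗p} ⊗ (s*)^{⊗q}` is a polynomial in the operator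
`T = (Σᵢ t₍ᵢ₎) ⊗ 1 + 1 ⊗ (Σⱼ (−t*)₍ⱼ₎)`. -/
theorem derived_representation_essentially_pure
    (k : Type*) [Field k] [CharZero k]
    (V : Type*) [AddCommGroup V] [Module k V] [FiniteDimensional k V]
    (s t : Module.End k V)
    (hs : s * s = 1)
    (hst : s * t = t * s)
    (hdiag : (⨆ μ : k, Module.End.eigenspace t μ) = ⊤)
    (haff : AffineIndependent ℚ
      (fun μ : {μ : k // Module.End.HasEigenvalue t μ} => (μ : k)))
    (hpure : s ∈ Algebra.adjoin k ({t} : Set (Module.End k V)))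
    (p q : ℕ) :
    TensorProduct.map
        (PiTensorProduct.map fun _ : Fin p => (s : V →ₗ[k] V))
        (PiTensorProduct.map fun _ : Fin q => (s : V →ₗ[k] V).dualMap)
      ∈ Algebra.adjoin k
        ({ TensorProduct.map
            (∑ i : Fin p, PiTensorProduct.map
              (Function.update (fun _ : Fin p => (LinearMap.id : V →ₗ[k] V)) i t))
            LinearMap.id
          + TensorProduct.map LinearMap.id
            (∑ j : Fin q, PiTensorProduct.map
              (Function.update
                (fun _ : Fin q =>
                  (LinearMap.id : Module.Dual k V →ₗ[k] Module.Dual k V))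
                j (-(t : V →ₗ[k] V).dualMap))) } :
          Set (Module.End k
            ((⨂[k] _ : Fin p, V) ⊗[k] (⨂[k] _ : Fin q, Module.Dual k V)))) := by
  classical
  obtain ⟨P, hP⟩ : ∃ P : Polynomial k, Polynomial.aeval t P = s := by
    rw [Algebra.adjoin_singleton_eq_range_aeval] at hpure
    exact hpure
  have hint := DirectSum.isInternal_submodule_of_iSupIndep_of_iSup_eq_top
    (Module.End.eigenspaces_iSupIndep t) hdiag
  let b := hint.collectedBasis
    (fun μ : k => Module.Basis.ofVectorSpace k (Module.End.eigenspace t μ))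
  have hb : ∀ i, t (b i) = i.1 • b i := fun i =>
    Module.End.mem_eigenspace_iff.mp (hint.collectedBasis_mem _ i)
  exact aux_main s t hs haff P hP b (fun i => i.1) hb p q
end

section
/- Let k be a field of characteristic 0 and r ≥ 1. For each i ∈ {1, …, r} let V_i be a finite-dimensional k-vector space and s_i, t_i ∈ End_k(V_i) with s_i ∘ s_i = id, s_i ∘ t_i = t_i ∘ s_i, and s_i belonging to the k-subalgebra of End_k(V_i) generated by t_i (so each (s_i, t_i) is an essentially pure representation of 𝔅₂). Then there exists a nonzero polynomial p in r variables over k such that for every α = (α_1, …, α_r) ∈ k^r with α_i ≠ 0 for all i and p(α) ≠ 0, the endomorphism s_1 ⊗ ⋯ ⊗ s_r of V = V_1 ⊗ ⋯ ⊗ V_r belongs to the k-subalgebra of End_k(V) generated by the single endomorphism T_α = Σ_{i=1}^{r} α_i · (t_i)_{(i)}, where (t_i)_{(i)} denotes t_i acting on the i-th tensor factor and the identity on all other factors. (For generic α ∈ 𝔾_m(k)^r, the twisted tensor product of essentially pure representations is essentially pure.) -/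
open scoped TensorProduct

theorem clear_denoms (R : Type*) [CommRing R] [IsDomain R] [CharZero R]
    (F : Polynomial R) (hF : F ≠ 0) :
    ∃ (Q a b H : Polynomial R) (d m : R) (n : ℕ), d ≠ 0 ∧ m ≠ 0 ∧
      a * Q + b * Polynomial.derivative Q = Polynomial.C d ∧
      F * H = Polynomial.C m * Q ^ n := by
  classical
  let K := FractionRing R
  haveI : CharZero K := charZero_of_injective_algebraMap (IsFractionRing.injective R K)
  have inj : Function.Injective (Polynomial.map (algebraMap R K)) :=
    Polynomial.map_injective _ (IsFractionRing.injective R K)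
  have clr : ∀ g : Polynomial K, ∃ (c : R) (G : Polynomial R), c ≠ 0 ∧
      G.map (algebraMap R K) = Polynomial.C (algebraMap R K c) * g := by
    intro g
    obtain ⟨c, hc⟩ := IsLocalization.integerNormalization_map_to_map (nonZeroDivisors R) g
    refine ⟨c, _, nonZeroDivisors.coe_ne_zero c, hc.trans ?_⟩
    ext i
    simp [Algebra.smul_def]
  let F' := F.map (algebraMap R K)
  have hF' : F' ≠ 0 := fun h => hF (inj (by simpa using h))
  let g := UniqueFactorizationMonoid.radical F'
  have hg : Squarefree g := UniqueFactorizationMonoid.squarefree_radical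
  obtain ⟨n, h, hn⟩ := UniqueFactorizationMonoid.exists_dvd_radical_self_pow hF'
  change g ^ n = F' * h at hn
  obtain ⟨c, Q, hc, hQ⟩ := clr g
  have hcK : algebraMap R K c ≠ 0 := by
    simpa using hc
  have hsep : (Q.map (algebraMap R K)).Separable := by
    rw [hQ]
    rw [PerfectField.separable_iff_squarefree]
    have hu : IsUnit (Polynomial.C (algebraMap R K c)) :=
      Polynomial.isUnit_C.2 (isUnit_iff_ne_zero.2 hcK)
    exact (Associated.squarefree_iff (associated_unit_mul_left _ _ hu)).2 hg
  obtain ⟨a, b, hab⟩ := hsep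
  obtain ⟨ca, a', hca, ha⟩ := clr a
  obtain ⟨cb, b', hcb, hb⟩ := clr b
  obtain ⟨ch, h', hch, hh⟩ := clr h
  refine ⟨Q, Polynomial.C cb * a', Polynomial.C ca * b', Polynomial.C (c ^ n) * h', ca * cb, ch, n,
    mul_ne_zero hca hcb, hch, ?_, ?_⟩
  · apply inj
    rw [Polynomial.derivative_map] at hab
    simp only [Polynomial.map_add, Polynomial.map_mul, ha, hb, Polynomial.map_C, map_mul]
    linear_combination (Polynomial.C (algebraMap R K ca) * Polynomial.C (algebraMap R K cb)) * hab
  · apply inj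
    simp only [Polynomial.map_mul, Polynomial.map_pow, hh, hQ, Polynomial.map_C, mul_pow, hn, map_pow]
    change F' * _ = _
    ring

theorem nilp_of_torsion {k B σ : Type*} [Field k] [CommRing B] [Algebra k B]
    (m : MvPolynomial σ k) (hm : m ≠ 0) (g : MvPolynomial σ B)
    (h : MvPolynomial.map (algebraMap k B) m * g = 0) : IsNilpotent g := by
  rw [MvPolynomial.isNilpotent_iff]
  intro i
  rw [nilpotent_iff_mem_prime]
  intro P hP
  have h2 := congrArg (MvPolynomial.map (Ideal.Quotient.mk P)) h
  rw [map_mul, map_zero, mul_eq_zero, MvPolynomial.map_map] at h2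
  rcases h2 with h2 | h2
  · exact absurd (MvPolynomial.map_injective _ (RingHom.injective _) (h2.trans (map_zero _).symm)) hm
  · have := congrArg (MvPolynomial.coeff i) h2
    rw [MvPolynomial.coeff_map] at this
    exact Ideal.Quotient.eq_zero_iff_mem.1 (by simpa using this)

theorem nilp_pderiv {B σ : Type*} [CommRing B] (i : σ) (g : MvPolynomial σ B)
    (h : IsNilpotent g) : IsNilpotent (MvPolynomial.pderiv i g) := by
  rw [MvPolynomial.isNilpotent_iff] at h ⊢
  intro j
  rw [nilpotent_iff_mem_prime]
  intro P hP
  have h2 : MvPolynomial.map (Ideal.Quotient.mk P) g = 0 := by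
    ext l
    rw [MvPolynomial.coeff_map, MvPolynomial.coeff_zero]
    exact Ideal.Quotient.eq_zero_iff_mem.2 (nilpotent_iff_mem_prime.1 (h l) P hP)
  have h3 := congrArg (MvPolynomial.pderiv i) h2
  rw [MvPolynomial.pderiv_map, map_zero] at h3
  have := congrArg (MvPolynomial.coeff j) h3
  rw [MvPolynomial.coeff_map] at this
  exact Ideal.Quotient.eq_zero_iff_mem.1 (by simpa using this)

theorem chain_rule {k B σ : Type*} [Field k] [CommRing B] [Algebra k B] (i : σ)
    (T : MvPolynomial σ B) (Q : Polynomial (MvPolynomial σ k)) :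
    ∃ Q' : Polynomial (MvPolynomial σ k),
      MvPolynomial.pderiv i (Q.eval₂ (MvPolynomial.map (algebraMap k B)) T) =
        Q'.eval₂ (MvPolynomial.map (algebraMap k B)) T +
        (Polynomial.derivative Q).eval₂ (MvPolynomial.map (algebraMap k B)) T *
          MvPolynomial.pderiv i T := by
  induction Q using Polynomial.induction_on' with
  | add p q hp hq =>
    obtain ⟨p', hp⟩ := hp
    obtain ⟨q', hq⟩ := hq
    refine ⟨p' + q', ?_⟩
    simp only [Polynomial.eval₂_add, map_add, hp, hq]
    ring
  | monomial n a =>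
    refine ⟨Polynomial.monomial n (MvPolynomial.pderiv i a), ?_⟩
    simp only [Polynomial.eval₂_monomial, Derivation.leibniz, Derivation.leibniz_pow,
      Polynomial.derivative_monomial, MvPolynomial.pderiv_map, map_mul, map_natCast, smul_eq_mul,
      nsmul_eq_mul]
    ring

theorem generic_generator {k B : Type*} [Field k] [CharZero k] [CommRing B] [Algebra k B]
    {r : ℕ} (τ : Fin r → B) (hτ : ∀ i, IsIntegral k (τ i)) :
    ∃ p : MvPolynomial (Fin r) k, p ≠ 0 ∧ ∀ α : Fin r → k, MvPolynomial.eval α p ≠ 0 →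
      ∀ i, ∃ u ∈ Algebra.adjoin k ({∑ j, α j • τ j} : Set B), IsNilpotent (τ i - u) := by
  let φ : MvPolynomial (Fin r) k →+* MvPolynomial (Fin r) B := MvPolynomial.map (algebraMap k B)
  let T : MvPolynomial (Fin r) B := ∑ j, MvPolynomial.X j * MvPolynomial.C (τ j)
  have hT : φ.IsIntegralElem T := by
    refine Finset.sum_induction _ φ.IsIntegralElem (fun _ _ => RingHom.IsIntegralElem.add _)
      (RingHom.isIntegralElem_zero _) ?_
    intro j _
    apply RingHom.IsIntegralElem.mul
    · have := RingHom.isIntegralElem_map φ (x := MvPolynomial.X j)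
      simpa [φ] using this
    · obtain ⟨P, hP, h0⟩ := hτ j
      refine ⟨P.map MvPolynomial.C, hP.map _, ?_⟩
      rw [Polynomial.eval₂_map]
      have : φ.comp MvPolynomial.C = MvPolynomial.C.comp (algebraMap k B) := by
        ext x; simp [φ]
      rw [this, ← Polynomial.hom_eval₂, h0, map_zero]
  obtain ⟨F, hF, hF0⟩ := hT
  obtain ⟨Q, a, b, H, d, m, n, hd, hm, hab, hFH⟩ := clear_denoms _ F hF.ne_zero
  have hN : IsNilpotent (Q.eval₂ φ T) := by
    have h1 := congrArg (Polynomial.eval₂ φ T) hFH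
    rw [Polynomial.eval₂_mul, hF0, zero_mul, Polynomial.eval₂_mul, Polynomial.eval₂_pow,
      Polynomial.eval₂_C] at h1
    obtain ⟨l, hl⟩ := nilp_of_torsion m hm _ h1.symm
    exact ⟨n * l, by rw [pow_mul, hl]⟩
  refine ⟨d, hd, fun α hα i => ?_⟩
  obtain ⟨Q', hQ'⟩ := chain_rule i T Q
  have hdT : MvPolynomial.pderiv i T = MvPolynomial.C (τ i) := by
    simp [T, MvPolynomial.pderiv_X, Pi.single_apply, Derivation.leibniz]
  have hDN := nilp_pderiv i _ hN
  let ev : MvPolynomial (Fin r) B →+* B := MvPolynomial.eval (fun j => algebraMap k B (α j))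
  let A := Algebra.adjoin k ({∑ j, α j • τ j} : Set B)
  have evT : ev T = ∑ j, α j • τ j := by
    simp [ev, T, Algebra.smul_def]
  have evφ : ev.comp φ = (algebraMap k B).comp (MvPolynomial.eval α) := by
    ext x <;> simp [ev, φ]
  have evmem : ∀ G : Polynomial (MvPolynomial (Fin r) k), ev (G.eval₂ φ T) ∈ A := by
    intro G
    rw [Polynomial.hom_eval₂, evφ, ← Polynomial.eval₂_map, evT]
    exact Polynomial.aeval_mem_adjoin_singleton k _
  have e1 := congrArg ev hQ'
  have e2 := congrArg (fun z => ev (Polynomial.eval₂ φ T z)) hab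
  simp only [Polynomial.eval₂_add, Polynomial.eval₂_mul, Polynomial.eval₂_C, map_add, map_mul] at e2
  have e3 : ev (φ d) = algebraMap k B (MvPolynomial.eval α d) := RingHom.congr_fun evφ d
  rw [hdT, map_add, map_mul] at e1
  have e4 : ev (MvPolynomial.C (τ i)) = τ i := by simp [ev]
  rw [e4] at e1
  rw [e3] at e2
  set δ := MvPolynomial.eval α d
  have hδ : algebraMap k B δ⁻¹ * algebraMap k B δ = 1 := by
    rw [← map_mul, inv_mul_cancel₀ hα, map_one]
  refine ⟨-(algebraMap k B δ⁻¹ * (ev (b.eval₂ φ T) * ev (Q'.eval₂ φ T))),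
    neg_mem (mul_mem (A.algebraMap_mem _) (mul_mem (evmem _) (evmem _))), ?_⟩
  have n1 : IsNilpotent (ev (Q.eval₂ φ T)) := hN.map ev
  have n2 := hDN.map ev
  have key : τ i - -(algebraMap k B δ⁻¹ * (ev (b.eval₂ φ T) * ev (Q'.eval₂ φ T))) =
      algebraMap k B δ⁻¹ * ev (a.eval₂ φ T) * τ i * ev (Q.eval₂ φ T) +
      algebraMap k B δ⁻¹ * ev (b.eval₂ φ T) *
        ev (MvPolynomial.pderiv i (Q.eval₂ φ T)) := by
    change ev (MvPolynomial.pderiv i (Q.eval₂ φ T)) = ev (Q'.eval₂ φ T) + _ at e1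
    rw [e1]
    linear_combination (-τ i) * hδ - (algebraMap k B δ⁻¹ * τ i) * e2
  rw [key]
  exact Commute.isNilpotent_add (Commute.all _ _)
    ((Commute.all _ _).isNilpotent_mul_left n1) ((Commute.all _ _).isNilpotent_mul_left n2)

theorem involution_mem {k B : Type*} [Field k] [CharZero k] [CommRing B] [Algebra k B]
    (A : Subalgebra k B) (τ u σ : B) (hu : u ∈ A) (hn : IsNilpotent (τ - u))
    (hσ : σ ∈ Algebra.adjoin k ({τ} : Set B)) (hσσ : σ * σ = 1) : σ ∈ A := by
  rw [Algebra.adjoin_singleton_eq_range_aeval] at hσ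
  obtain ⟨P, rfl⟩ := hσ
  change Polynomial.aeval τ P * Polynomial.aeval τ P = 1 at hσσ
  change Polynomial.aeval τ P ∈ A
  set σ := Polynomial.aeval τ P
  let v : A := Polynomial.aeval (⟨u, hu⟩ : A) P
  have hv : (v : B) = Polynomial.aeval u P :=
    (Polynomial.aeval_algHom_apply A.val (⟨u, hu⟩ : A) P).symm
  have hvn : IsNilpotent (σ - v) := by
    obtain ⟨c, hc⟩ := Polynomial.sub_dvd_eval_sub τ u (P.map (algebraMap k B))
    rw [Polynomial.eval_map_algebraMap, Polynomial.eval_map_algebraMap] at hc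
    rw [hv]
    change IsNilpotent (Polynomial.aeval τ P - Polynomial.aeval u P)
    rw [hc]
    exact (Commute.all _ _).isNilpotent_mul_right hn
  let W : Polynomial k := Polynomial.X ^ 2 - 1
  have two : algebraMap k B 2⁻¹ * 2 = 1 := by
    rw [← map_ofNat (algebraMap k B) 2, ← map_mul]; simp
  have twoA : algebraMap k A 2⁻¹ * 2 = 1 := by
    rw [← map_ofNat (algebraMap k A) 2, ← map_mul]; simp
  have hWv : IsNilpotent (Polynomial.aeval v W) := by
    rw [← IsNilpotent.map_iff (f := A.val) Subtype.val_injective]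
    have : A.val (Polynomial.aeval v W) = (σ - v) * (-(σ + v)) := by
      simp only [W, map_sub, map_pow, Polynomial.aeval_X, map_one, Subalgebra.coe_val]
      linear_combination hσσ
    rw [this]
    exact (Commute.all _ _).isNilpotent_mul_right hvn
  have hW'v : IsUnit (Polynomial.aeval v (Polynomial.derivative W)) := by
    have hsq : IsUnit (v ^ 2) := by
      have : v ^ 2 = Polynomial.aeval v W + 1 := by simp [W]
      rw [this]
      exact hWv.isUnit_add_one
    have hvu : IsUnit v := (isUnit_pow_iff two_ne_zero).1 hsq
    have : Polynomial.aeval v (Polynomial.derivative W) = 2 * v := by simp [W]; ring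
    rw [this]
    exact (IsUnit.of_mul_eq_one _ ((mul_comm _ _).trans twoA)).mul hvu
  obtain ⟨w, ⟨hw1, hw2⟩, -⟩ := Polynomial.existsUnique_nilpotent_sub_and_aeval_eq_zero hWv hW'v
  have hwB : (w : B) ^ 2 = 1 := by
    have := congrArg A.val hw2
    simpa [W, sub_eq_zero] using this
  have hsub : IsNilpotent (σ - w) := by
    have h1 : IsNilpotent ((v : B) - w) := hw1.map A.val
    have := (Commute.all _ _).isNilpotent_add hvn h1
    simpa using this
  have hunit : IsUnit (σ + w) := by
    have h1 : IsUnit (2 * σ) := (IsUnit.of_mul_eq_one _ ((mul_comm _ _).trans two)).mul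
      (IsUnit.of_mul_eq_one _ hσσ)
    have := IsNilpotent.isUnit_add_right_of_commute hsub.neg h1 (Commute.all _ _)
    convert this using 1
    ring
  have : (σ - w) * (σ + w) = 0 := by linear_combination hσσ - hwB
  have := hunit.mul_left_eq_zero.1 this
  rw [sub_eq_zero.1 this]
  exact w.2

theorem generic_comm {k E : Type*} [Field k] [CharZero k] [Ring E] [Algebra k E]
    [FiniteDimensional k E] {r : ℕ} (τ : Fin r → E) (hc : ∀ i j, τ i * τ j = τ j * τ i) :
    ∃ p : MvPolynomial (Fin r) k, p ≠ 0 ∧ ∀ α : Fin r → k, MvPolynomial.eval α p ≠ 0 →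
      ∀ i, ∀ σ ∈ Algebra.adjoin k ({τ i} : Set E), σ * σ = 1 →
        σ ∈ Algebra.adjoin k ({∑ j, α j • τ j} : Set E) := by
  let B := Algebra.adjoin k (Set.range τ)
  letI : CommRing B := Algebra.adjoinCommRingOfComm k (by
    rintro _ ⟨i, rfl⟩ _ ⟨j, rfl⟩; exact hc i j)
  let τ' : Fin r → B := fun i => ⟨τ i, Algebra.subset_adjoin ⟨i, rfl⟩⟩
  obtain ⟨p, hp, h⟩ := generic_generator (k := k) τ' (fun i => Algebra.IsIntegral.isIntegral _)
  refine ⟨p, hp, fun α hα i σ hσ hσσ => ?_⟩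
  obtain ⟨u, hu, hn⟩ := h α hα i
  have hmap : ∀ x : B, (Algebra.adjoin k {x}).map B.val = Algebra.adjoin k {(x : E)} := by
    intro x
    rw [AlgHom.map_adjoin]; simp
  have hσ2 : σ ∈ (Algebra.adjoin k {τ' i}).map B.val := by rw [hmap]; exact hσ
  obtain ⟨σ', hσ', rfl⟩ := hσ2
  have := involution_mem _ _ _ σ' hu hn hσ' (Subtype.val_injective hσσ)
  have h3 : B.val σ' ∈ (Algebra.adjoin k {∑ j, α j • τ' j}).map B.val := ⟨σ', this, rfl⟩
  rw [hmap] at h3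
  simpa [τ'] using h3

theorem generic_tensor_product_essentially_pure
    (k : Type*) [Field k] [CharZero k]
    (r : ℕ) (hr : 1 ≤ r)
    (V : Fin r → Type*) [∀ i, AddCommGroup (V i)] [∀ i, Module k (V i)]
    [∀ i, FiniteDimensional k (V i)]
    (s t : ∀ i, Module.End k (V i))
    (hs : ∀ i, s i * s i = 1)
    (hst : ∀ i, s i * t i = t i * s i)
    (hpure : ∀ i, s i ∈ Algebra.adjoin k ({t i} : Set (Module.End k (V i)))) :
    ∃ p : MvPolynomial (Fin r) k, p ≠ 0 ∧
      ∀ α : Fin r → k, (∀ i, α i ≠ 0) → MvPolynomial.eval α p ≠ 0 →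
        PiTensorProduct.map (fun i => (s i : V i →ₗ[k] V i))
          ∈ Algebra.adjoin k
            ({∑ i : Fin r, α i •
                PiTensorProduct.map
                  (Function.update (fun j => (LinearMap.id : V j →ₗ[k] V j)) i (t i))} :
              Set (Module.End k (⨂[k] i, V i))) := by
  let M : (∀ i, Module.End k (V i)) →* Module.End k (⨂[k] i, V i) := PiTensorProduct.mapMonoidHom
  let ι : ∀ i, Module.End k (V i) →ₐ[k] Module.End k (⨂[k] i, V i) := fun i =>
    AlgHom.ofLinearMap
      { toFun := fun f => PiTensorProduct.map
          (Function.update (fun j => (LinearMap.id : V j →ₗ[k] V j)) i f)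
        map_add' := fun f g => PiTensorProduct.map_update_add _ _ _ _
        map_smul' := fun c f => PiTensorProduct.map_update_smul _ _ _ _ }
      (map_one (M.comp (MonoidHom.mulSingle _ i)))
      (map_mul (M.comp (MonoidHom.mulSingle _ i)))
  have hι : ∀ i f, ι i f = M (Pi.mulSingle i f) := fun i f => rfl
  obtain ⟨p, hp, h⟩ := generic_comm (k := k) (fun i => ι i (t i)) (by
    intro i j
    by_cases hij : i = j
    · subst hij; rfl
    · simp only [hι, ← map_mul]
      rw [(Pi.mulSingle_commute (f := fun i => Module.End k (V i)) hij (t i) (t j)).eq])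
  refine ⟨p, hp, fun α _ hα => ?_⟩
  have h2 := h α hα
  let A := Algebra.adjoin k ({∑ j, α j • ι j (t j)} : Set (Module.End k (⨂[k] i, V i)))
  have : s ∈ A.toSubmonoid.comap M := by
    apply Submonoid.pi_mem_of_mulSingle_mem
    intro i
    change ι i (s i) ∈ A
    refine h2 i _ ?_ (by rw [← map_mul, hs, map_one])
    have h3 : ι i (s i) ∈ (Algebra.adjoin k {t i}).map (ι i) := ⟨_, hpure i, rfl⟩
    rw [AlgHom.map_adjoin, Set.image_singleton] at h3
    exact h3
  exact this
end

section
/- Let k be a field of characteristic 0, V a k-vector space, π : S_3 → GL_k(V) a group homomorphism where S_3 = Equiv.Perm (Fin 3), and t a family assigning to each pair (i, j) of distinct elements of Fin 3 an endomorphism t i j ∈ End_k(V) with t i j = t j i, satisfying the equivariance π(s) ∘ (t i j) ∘ π(s)⁻¹ = t (s i) (s j) for all s ∈ S_3 and the infinitesimal braid relations [t i j, t i k + t k j] = 0 for pairwise distinct i, j, k. Suppose t 0 1 is a nilpotent transvection: there exist a nonzero vector v ∈ V and a nonzero linear form φ : V → k with φ(v) = 0 such that t 0 1 (x) = φ(x)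 · v for all x ∈ V. Then [t 0 1, t 1 2] = 0, i.e. t 0 1 and t 1 2 commute. -/
/-- Lemma on nilpotent transvections: if, in a representation of the infinitesimal
braid algebra `𝔅₃`, the image of `t₁₂` is a nilpotent transvection
`x ↦ φ(x)·v` with `φ(v) = 0`, then `[t₁₂, t₂₃] = 0` (i.e. the representation of the
infinitesimal pure braid Lie algebra `𝒯₃` is commutative). -/
theorem nilpotent_transvection_commutes
    (k : Type*) [Field k] [CharZero k]
    (V : Type*) [AddCommGroup V] [Module k V]
    (π : Equiv.Perm (Fin 3) →* (Module.End k V)ˣ)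
    (t : Fin 3 → Fin 3 → Module.End k V)
    (hsymm : ∀ i j : Fin 3, i ≠ j → t i j = t j i)
    (hequiv : ∀ (s : Equiv.Perm (Fin 3)) (i j : Fin 3), i ≠ j →
      conjAct π s (t i j) = t (s i) (s j))
    (hrel : ∀ i j l : Fin 3, i ≠ j → i ≠ l → j ≠ l → ⁅t i j, t i l + t l j⁆ = 0)
    (v : V) (hv : v ≠ 0)
    (φ : V →ₗ[k] k) (hφ : φ ≠ 0) (hφv : φ v = 0)
    (ht : ∀ x : V, t 0 1 x = φ x • v) :
    ⁅t 0 1, t 1 2⁆ = 0 := by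
  set C : Module.End k V := ((π (finRotate 3) : (Module.End k V)ˣ) : Module.End k V) with hC
  set D : Module.End k V := (((π (finRotate 3))⁻¹ : (Module.End k V)ˣ) : Module.End k V) with hD
  set S : Module.End k V := ((π (Equiv.swap 0 1) : (Module.End k V)ˣ) : Module.End k V) with hS
  have hSinv : (π (Equiv.swap 0 1))⁻¹ = π (Equiv.swap 0 1) := by
    rw [← map_inv, Equiv.swap_inv]
  have hSS : S * S = 1 := by
    rw [hS, ← Units.val_mul, ← map_mul, Equiv.swap_mul_self, map_one, Units.val_one]
  have hDS : D = S * C * S := by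
    rw [hS, hC, hD, ← Units.val_mul, ← Units.val_mul, ← map_mul, ← map_mul, ← map_inv]
    congr 2
    decide
  have e1 : C * t 0 1 * D = t 1 2 := hequiv (finRotate 3) 0 1 (by decide)
  have e2 : S * t 0 1 * S = t 0 1 := by
    have h := hequiv (Equiv.swap 0 1) 0 1 (by decide)
    rw [conjAct, hSinv] at h
    rw [hsymm 0 1 (by decide)] at h ⊢
    rw [hS, h, Equiv.swap_apply_left, Equiv.swap_apply_right]
  have e3 : S * t 1 2 * S = t 0 2 := by
    have h := hequiv (Equiv.swap 0 1) 1 2 (by decide)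
    rw [conjAct, hSinv] at h
    exact h
  have hSSx : ∀ x, S (S x) = x := fun x => by
    have := congrArg (fun f => f x) hSS
    simpa using this
  have h12 : ∀ x, t 1 2 x = φ (D x) • C v := fun x => by
    rw [← e1]; simp [ht]
  have h01 : ∀ x, φ (S x) • S v = φ x • v := fun x => by
    have := congrArg (fun f => f x) e2
    simpa [ht] using this
  obtain ⟨x₀, hx₀⟩ : ∃ x, φ x ≠ 0 := by
    by_contra! h
    exact hφ (LinearMap.ext h)
  obtain ⟨ε, hε⟩ : ∃ ε : k, S v = ε • v := by
    refine ⟨(φ x₀)⁻¹ * φ (S x₀), ?_⟩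
    have := h01 (S x₀)
    rw [hSSx] at this
    rw [mul_smul, ← this, smul_smul, inv_mul_cancel₀ hx₀, one_smul]
  have hε2 : ε * ε = 1 := by
    have := hSSx v
    rw [hε, map_smul, hε, smul_smul] at this
    exact smul_left_injective k hv (by simpa using this)
  have hφS : ∀ x, φ (S x) = ε * φ x := fun x => by
    have := h01 x
    rw [hε, smul_smul] at this
    have h : φ (S x) * ε = φ x := smul_left_injective k hv this
    rw [← h]; linear_combination (-φ (S x)) * hε2
  have hq : φ (D v) = φ (C v) := by
    rw [hDS]
    simp only [Module.End.mul_apply, hφS, hε, map_smul, smul_eq_mul]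
    linear_combination φ (C v) * hε2
  have h02 : φ (t 0 2 v) = φ (t 1 2 v) := by
    rw [← e3]
    simp only [Module.End.mul_apply, hφS, hε, map_smul, smul_eq_mul]
    linear_combination φ (t 1 2 v) * hε2
  have hr := hrel 0 1 2 (by decide) (by decide) (by decide)
  rw [hsymm 2 1 (by decide), Ring.lie_def] at hr
  have hr2 := congrArg (fun f => f v) hr
  simp only [LinearMap.sub_apply, Module.End.mul_apply, ht, hφv, zero_smul, map_zero, sub_zero,
    LinearMap.zero_apply, LinearMap.add_apply, map_add, h02] at hr2
  have hp : φ (C v) = 0 := by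
    have h := (smul_eq_zero.mp hr2).resolve_right hv
    rw [h12, map_smul, hq, smul_eq_mul, ← two_mul] at h
    simpa using h
  ext x
  rw [Ring.lie_def]
  simp [ht, h12, hp, hq]
end

section
/- Let ℝ((h)) denote the field of formal Laurent series over ℝ (Mathlib: LaurentSeries ℝ), which contains ℝ as constant series and the element h (the series X). Call a Laurent series f convergent if there exists a real number r > 0 such that the family (|coeff_n f| · rⁿ)_{n ∈ ℤ} is summable. Let L be a subfield of ℝ((h)) which contains every real constant and contains h, and which is finitely generated over ℝ: L is the smallest subfield of ℝ((h)) containing all constants together with some finite subset. Then for every finite family a_1, …, a_t of elements of L and every m ∈ ℕ, there exists a ring homomorphism φ : L → ℝ((h)) (automatically an injective field embedding) such that: φ fixes every real constant and φ(h) = h (so φ is an isomorphism over ℝ(h) onto its image); every element of the image of φ is convergent; and for each i, the series φ(a_i) − a_i has vanishing n-th coefficient for every integer n < m (i.e. a_i is congruent to φ(a_i) modulo h^m). -/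
/-- A Laurent series over `ℝ` is convergent if, for some radius `r > 0`, the family
of absolute values of its coefficients rescaled by `rⁿ` is summable. -/
def IsConvergent (f : LaurentSeries ℝ) : Prop :=
  ∃ r : ℝ, 0 < r ∧ Summable fun n : ℤ => |f.coeff n| * r ^ n

namespace ConvEmb

open PowerSeries in
/-- Absolute summability of a power series at radius `r`. -/
def SumAt (r : ℝ) (f : PowerSeries ℝ) : Prop := Summable fun n : ℕ => |coeff n f| * r ^ n

/-- Convergent power series. -/
def Conv (f : PowerSeries ℝ) : Prop := ∃ r : ℝ, 0 < r ∧ SumAt r f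

lemma SumAt.mono {r r' : ℝ} {f : PowerSeries ℝ} (h : SumAt r f) (h0 : 0 ≤ r') (hr : r' ≤ r) :
    SumAt r' f := by
  refine Summable.of_nonneg_of_le (fun n => by positivity) (fun n => ?_) h
  gcongr

lemma SumAt.add {r : ℝ} {f g : PowerSeries ℝ} (h0 : 0 ≤ r) (hf : SumAt r f) (hg : SumAt r g) :
    SumAt r (f + g) := by
  refine Summable.of_nonneg_of_le (fun n => by positivity) (fun n => ?_) (Summable.add hf hg)
  rw [map_add, ← add_mul]
  gcongr
  exact abs_add_le _ _

lemma SumAt.mul {r : ℝ} {f g : PowerSeries ℝ} (h0 : 0 ≤ r) (hf : SumAt r f) (hg : SumAt r g) :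
    SumAt r (f * g) := by
  have hf' : Summable fun n => ‖PowerSeries.coeff n f * r ^ n‖ := by
    simpa [SumAt, abs_mul, abs_of_nonneg h0] using hf
  have hg' : Summable fun n => ‖PowerSeries.coeff n g * r ^ n‖ := by
    simpa [SumAt, abs_mul, abs_of_nonneg h0] using hg
  have := summable_norm_sum_mul_antidiagonal_of_summable_norm hf' hg'
  refine this.congr fun n => ?_
  rw [PowerSeries.coeff_mul, ← abs_of_nonneg (pow_nonneg h0 n), ← abs_mul, Finset.sum_mul,
    Real.norm_eq_abs]
  congr 1
  refine Finset.sum_congr rfl fun p hp => ?_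
  rw [← Finset.HasAntidiagonal.mem_antidiagonal.1 hp, pow_add]
  ring

lemma Conv.two {f g : PowerSeries ℝ} (hf : Conv f) (hg : Conv g) :
    ∃ r : ℝ, 0 < r ∧ SumAt r f ∧ SumAt r g := by
  obtain ⟨r, hr, hf⟩ := hf
  obtain ⟨s, hs, hg⟩ := hg
  exact ⟨min r s, lt_min hr hs, hf.mono (by positivity) (min_le_left _ _),
    hg.mono (by positivity) (min_le_right _ _)⟩

lemma Conv.add {f g : PowerSeries ℝ} (hf : Conv f) (hg : Conv g) : Conv (f + g) := by
  obtain ⟨r, hr, h1, h2⟩ := hf.two hg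
  exact ⟨r, hr, h1.add hr.le h2⟩

lemma Conv.mul {f g : PowerSeries ℝ} (hf : Conv f) (hg : Conv g) : Conv (f * g) := by
  obtain ⟨r, hr, h1, h2⟩ := hf.two hg
  exact ⟨r, hr, h1.mul hr.le h2⟩

lemma conv_C (c : ℝ) : Conv (PowerSeries.C c) := by
  refine ⟨1, one_pos, summable_of_ne_finset_zero (s := {0}) fun n hn => ?_⟩
  simp at hn
  simp [PowerSeries.coeff_C, hn]

lemma conv_X : Conv PowerSeries.X := by
  refine ⟨1, one_pos, summable_of_ne_finset_zero (s := {1}) fun n hn => ?_⟩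
  simp at hn
  simp [PowerSeries.coeff_X, hn]

lemma Conv.pow {f : PowerSeries ℝ} (hf : Conv f) (n : ℕ) : Conv (f ^ n) := by
  induction n with
  | zero => simpa using conv_C 1
  | succ k ih => rw [pow_succ]; exact ih.mul hf

/-- truncated norm -/
noncomputable def tn (r : ℝ) (n : ℕ) (f : PowerSeries ℝ) : ℝ :=
  ∑ i ∈ Finset.range n, |PowerSeries.coeff i f| * r ^ i

lemma tn_nonneg {r : ℝ} (h0 : 0 ≤ r) (n : ℕ) (f : PowerSeries ℝ) : 0 ≤ tn r n f :=
  Finset.sum_nonneg fun i _ => by positivity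

lemma tn_add {r : ℝ} (h0 : 0 ≤ r) (n : ℕ) (f g : PowerSeries ℝ) :
    tn r n (f + g) ≤ tn r n f + tn r n g := by
  unfold tn
  rw [← Finset.sum_add_distrib]
  refine Finset.sum_le_sum fun i _ => ?_
  rw [map_add, ← add_mul]
  gcongr
  exact abs_add_le _ _

lemma tn_mul {r : ℝ} (h0 : 0 ≤ r) (n : ℕ) (f g : PowerSeries ℝ) :
    tn r n (f * g) ≤ tn r n f * tn r n g := by
  unfold tn
  rw [Finset.sum_mul_sum, ← Finset.sum_product']
  have h1 : ∀ i ∈ Finset.range n, |PowerSeries.coeff i (f * g)| * r ^ i ≤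
      ∑ p ∈ Finset.HasAntidiagonal.antidiagonal i, |PowerSeries.coeff p.1 f| * r ^ p.1 *
        (|PowerSeries.coeff p.2 g| * r ^ p.2) := by
    intro i _
    rw [PowerSeries.coeff_mul]
    calc _ ≤ (∑ p ∈ Finset.HasAntidiagonal.antidiagonal i, |PowerSeries.coeff p.1 f * PowerSeries.coeff p.2 g|)
          * r ^ i := by
            gcongr
            exact Finset.abs_sum_le_sum_abs _ _
      _ = _ := by
            rw [Finset.sum_mul]
            refine Finset.sum_congr rfl fun p hp => ?_
            rw [← Finset.HasAntidiagonal.mem_antidiagonal.1 hp, pow_add, abs_mul]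
            ring
  refine (Finset.sum_le_sum h1).trans ?_
  rw [Finset.sum_sigma']
  have hinj : Set.InjOn (fun x : (_ : ℕ) × ℕ × ℕ => x.2)
      ((Finset.range n).sigma fun i => Finset.HasAntidiagonal.antidiagonal i) := by
    rintro ⟨a, b, c⟩ h ⟨a', b', c'⟩ h' hh
    simp at h h' hh
    obtain ⟨rfl, rfl⟩ := hh
    obtain rfl : a = a' := by omega
    rfl
  rw [← Finset.sum_image (f := fun p : ℕ × ℕ => |PowerSeries.coeff p.1 f| * r ^ p.1 *
        (|PowerSeries.coeff p.2 g| * r ^ p.2)) hinj]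
  refine Finset.sum_le_sum_of_subset_of_nonneg ?_ fun p _ _ => by positivity
  rintro ⟨b, c⟩ h
  simp at h ⊢
  omega

lemma tn_pow {r : ℝ} (h0 : 0 ≤ r) (n : ℕ) (f g : PowerSeries ℝ) (k : ℕ) :
    tn r n (g * f ^ k) ≤ tn r n g * tn r n f ^ k := by
  induction k with
  | zero => simp
  | succ k ih =>
    rw [pow_succ, ← mul_assoc, pow_succ, ← mul_assoc]
    exact (tn_mul h0 n _ _).trans (mul_le_mul_of_nonneg_right ih (tn_nonneg h0 _ _))

lemma tn_sum {r : ℝ} (h0 : 0 ≤ r) (n d : ℕ) (f : ℕ → PowerSeries ℝ) :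
    tn r n (∑ k ∈ Finset.range d, f k) ≤ ∑ k ∈ Finset.range d, tn r n (f k) := by
  induction d with
  | zero => simp [tn]
  | succ d ih =>
    rw [Finset.sum_range_succ, Finset.sum_range_succ]
    exact (tn_add h0 _ _ _).trans (by gcongr)

lemma tn_C_add_X_mul {r : ℝ} (n : ℕ) (c : ℝ) (f : PowerSeries ℝ) :
    tn r (n + 1) (PowerSeries.C c + PowerSeries.X * f) = |c| + r * tn r n f := by
  unfold tn
  rw [Finset.sum_range_succ', add_comm, Finset.mul_sum]
  congr 1
  · simp
  · refine Finset.sum_congr rfl fun i _ => ?_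
    simp [PowerSeries.coeff_succ_X_mul]
    ring

/-- Common radius for a finite family. -/
lemma Conv.finite {d : ℕ} {g : ℕ → PowerSeries ℝ} (hg : ∀ k < d, Conv (g k)) :
    ∃ r : ℝ, 0 < r ∧ ∀ k < d, SumAt r (g k) := by
  induction d with
  | zero => exact ⟨1, one_pos, by simp⟩
  | succ d ih =>
    obtain ⟨r, hr, h⟩ := ih fun k hk => hg k (by omega)
    obtain ⟨s, hs, h'⟩ := hg d (by omega)
    refine ⟨min r s, lt_min hr hs, fun k hk => ?_⟩
    rcases Nat.lt_succ_iff_lt_or_eq.1 hk with hk | rfl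
    · exact (h k hk).mono (by positivity) (min_le_left _ _)
    · exact h'.mono (by positivity) (min_le_right _ _)

/-- The majorant argument: a formal solution of a convergent fixed point equation converges. -/
lemma conv_of_eq {d : ℕ} {g : ℕ → PowerSeries ℝ} (hg : ∀ k < d, Conv (g k)) {c : ℝ}
    {u : PowerSeries ℝ}
    (hu : u = PowerSeries.C c + PowerSeries.X * ∑ k ∈ Finset.range d, g k * u ^ k) : Conv u := by
  obtain ⟨r₀, hr₀, hs⟩ := Conv.finite hg
  set M : ℕ → ℝ := fun k => ∑' n, |PowerSeries.coeff n (g k)| * r₀ ^ n with hM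
  set B : ℝ := |c| + 1 with hB
  have hB0 : 0 < B := by positivity
  have hM0 : ∀ k, 0 ≤ M k := fun k => tsum_nonneg fun n => by positivity
  set T : ℝ := ∑ k ∈ Finset.range d, M k * B ^ k with hT
  have hT0 : 0 ≤ T := Finset.sum_nonneg fun k _ => mul_nonneg (hM0 k) (by positivity)
  set r : ℝ := min r₀ (1 / (T + 1)) with hr
  have hr0 : 0 < r := lt_min hr₀ (by positivity)
  have hrT : r * T ≤ 1 := by
    calc r * T ≤ 1 / (T + 1) * T := by gcongr; exact min_le_right _ _
      _ ≤ 1 := by rw [one_div, inv_mul_le_iff₀ (by positivity)]; linarith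
  have hgM : ∀ k < d, ∀ n, tn r n (g k) ≤ M k := by
    intro k hk n
    calc tn r n (g k) ≤ tn r₀ n (g k) := by
          unfold tn
          refine Finset.sum_le_sum fun i _ => ?_
          gcongr
          exact min_le_left _ _
      _ ≤ M k := (hs k hk).sum_le_tsum _ fun i _ => by positivity
  have key : ∀ n, tn r n u ≤ B := by
    intro n
    induction n with
    | zero => simp [tn]; positivity
    | succ n ih =>
      rw [hu, tn_C_add_X_mul]
      have : tn r n (∑ k ∈ Finset.range d, g k * u ^ k) ≤ T := by
        refine (tn_sum hr0.le _ _ _).trans (Finset.sum_le_sum fun k hk => ?_)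
        refine (tn_pow hr0.le _ _ _ _).trans ?_
        have h1 := hgM k (Finset.mem_range.1 hk) n
        have h2 := tn_nonneg hr0.le n u
        have h3 := tn_nonneg hr0.le n (g k)
        gcongr
      have := mul_le_mul_of_nonneg_left this hr0.le
      linarith
  exact ⟨r, hr0, summable_of_sum_range_le (fun n => by positivity) key⟩

/-- Formal solution of the fixed point equation. -/
lemma exists_formal (d : ℕ) (g : ℕ → PowerSeries ℝ) (c : ℝ) :
    ∃ u : PowerSeries ℝ,
      u = PowerSeries.C c + PowerSeries.X * ∑ k ∈ Finset.range d, g k * u ^ k := by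
  set Φ : PowerSeries ℝ → PowerSeries ℝ :=
    fun u => PowerSeries.C c + PowerSeries.X * ∑ k ∈ Finset.range d, g k * u ^ k with hΦ
  have hc : ∀ n u v, PowerSeries.X ^ n ∣ u - v → PowerSeries.X ^ (n + 1) ∣ Φ u - Φ v := by
    intro n u v h
    have : Φ u - Φ v = PowerSeries.X * ∑ k ∈ Finset.range d, g k * (u ^ k - v ^ k) := by
      simp only [hΦ, mul_sub, Finset.sum_sub_distrib]
      ring
    rw [this, pow_succ']
    refine mul_dvd_mul_left _ (Finset.dvd_sum fun k _ => ?_)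
    exact Dvd.dvd.mul_left (h.trans (sub_dvd_pow_sub_pow _ _ _)) _
  set s : ℕ → PowerSeries ℝ := fun n => Φ^[n] 0 with hs
  have hs1 : ∀ n, s (n + 1) = Φ (s n) := fun n => Function.iterate_succ_apply' _ _ _
  have hstep : ∀ n, PowerSeries.X ^ n ∣ s (n + 1) - s n := by
    intro n
    induction n with
    | zero => simp
    | succ n ih => rw [hs1 (n + 1), hs1 n]; exact hc _ _ _ (by rw [← hs1]; exact ih)
  have hle : ∀ n k, PowerSeries.X ^ n ∣ s (n + k) - s n := by
    intro n k
    induction k with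
    | zero => simp
    | succ k ih =>
      have := (pow_dvd_pow PowerSeries.X (Nat.le_add_right n k)).trans (hstep (n + k))
      have := dvd_add this ih
      simpa [add_assoc] using this
  set u : PowerSeries ℝ := PowerSeries.mk fun n => PowerSeries.coeff n (s (n + 1)) with hu
  have hus : ∀ n, PowerSeries.X ^ n ∣ u - s n := by
    intro n
    rw [PowerSeries.X_pow_dvd_iff]
    intro m hm
    obtain ⟨k, rfl⟩ := Nat.exists_eq_add_of_le (Nat.succ_le_of_lt hm)
    have := PowerSeries.X_pow_dvd_iff.1 (hle (m + 1) k) m (by omega)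
    simp only [Nat.succ_eq_add_one]
    rw [map_sub] at this ⊢
    simp only [hu, PowerSeries.coeff_mk]
    linarith
  refine ⟨u, ?_⟩
  change u = Φ u
  rw [← sub_eq_zero]
  ext n
  have h1 := hus (n + 1)
  have h2 := hc _ _ _ (hus n)
  rw [← hs1] at h2
  have := dvd_sub h1 h2
  rw [sub_sub_sub_cancel_right] at this
  simpa using PowerSeries.X_pow_dvd_iff.1 this n (by omega)

lemma Conv.inv {f : PowerSeries ℝ} (hf : Conv f) (h0 : PowerSeries.constantCoeff f ≠ 0) :
    Conv f⁻¹ := by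
  set a := PowerSeries.constantCoeff f with ha
  obtain ⟨f₁, hf₁⟩ : PowerSeries.X ∣ f - PowerSeries.C a := by
    rw [PowerSeries.X_dvd_iff]; simp [ha]
  have hcf₁ : Conv f₁ := by
    obtain ⟨r, hr, h⟩ := hf
    refine ⟨r, hr, ?_⟩
    have h2 := (summable_nat_add_iff 1).2 h
    have h3 := h2.mul_left r⁻¹
    refine h3.congr fun n => ?_
    have : PowerSeries.coeff (n + 1) f = PowerSeries.coeff n f₁ := by
      rw [← PowerSeries.coeff_succ_X_mul n f₁, ← hf₁]
      simp
    rw [this, pow_succ]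
    field_simp
  have hmul : f * f⁻¹ = 1 := PowerSeries.mul_inv_cancel _ h0
  have hCa : (PowerSeries.C a⁻¹ : PowerSeries ℝ) * PowerSeries.C a = 1 := by
    rw [← map_mul, inv_mul_cancel₀ h0, map_one]
  refine conv_of_eq (d := 2) (g := fun k => if k = 1 then PowerSeries.C (-a⁻¹) * f₁ else 0)
    (c := a⁻¹) ?_ ?_
  · intro k _
    split_ifs
    · exact (conv_C _).mul hcf₁
    · simpa using conv_C 0
  · simp only [Finset.sum_range_succ, Finset.sum_range_zero]
    simp
    have e : f = PowerSeries.C a + PowerSeries.X * f₁ := by rw [← hf₁]; ring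
    have h5 : PowerSeries.C a * f⁻¹ + PowerSeries.X * f₁ * f⁻¹ = 1 := by
      rw [← add_mul, ← e, hmul]
    have h6 : PowerSeries.C a⁻¹ * (PowerSeries.C a * f⁻¹ + PowerSeries.X * f₁ * f⁻¹)
      = PowerSeries.C a⁻¹ := by rw [h5, mul_one]
    rw [mul_add, ← mul_assoc, hCa, one_mul] at h6
    linear_combination h6

end ConvEmb

namespace ConvEmb
open HahnSeries LaurentSeries


/-- h^n -/
lemma single_zpow' (n : ℤ) : (single (1 : ℤ) (1 : ℝ) : LaurentSeries ℝ) ^ n = single n 1 := by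
  exact (RatFunc.single_zpow n).symm

lemma isConv_shift (k : ℤ) {f : LaurentSeries ℝ} (hf : IsConvergent f) :
    IsConvergent (single k (1 : ℝ) * f) := by
  obtain ⟨r, hr, h⟩ := hf
  refine ⟨r, hr, ?_⟩
  rw [← (Equiv.addRight k).summable_iff]
  refine (h.mul_left (r ^ k)).congr fun n => ?_
  simp only [Function.comp, Equiv.coe_addRight, HahnSeries.coeff_single_mul_add, one_mul]
  rw [zpow_add₀ hr.ne']
  ring

lemma isConv_coe {f : PowerSeries ℝ} : IsConvergent (f : LaurentSeries ℝ) ↔ Conv f := by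
  unfold IsConvergent Conv SumAt
  refine exists_congr fun r => and_congr_right fun hr => ?_
  rw [← (Nat.cast_injective (R := ℤ)).summable_iff]
  · refine summable_congr fun n => ?_
    simp
  · intro n hn
    have : n < 0 := by
      by_contra h
      exact hn ⟨n.toNat, by simpa using h⟩
    simp [PowerSeries.coeff_coe, this]

lemma isConv_iff {f : LaurentSeries ℝ} : IsConvergent f ↔
    ∃ (k : ℤ) (g : PowerSeries ℝ), Conv g ∧ f = single k (1 : ℝ) * (g : LaurentSeries ℝ) := by
  constructor
  · intro h
    refine ⟨f.order, f.powerSeriesPart, ?_, (single_order_mul_powerSeriesPart f).symm⟩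
    rw [← isConv_coe, ofPowerSeries_powerSeriesPart]
    exact isConv_shift _ h
  · rintro ⟨k, g, hg, rfl⟩
    exact isConv_shift _ (isConv_coe.2 hg)

lemma isConv_iff' {f : LaurentSeries ℝ} (hf : IsConvergent f) : ∃ N : ℤ, ∀ k ≤ N,
    ∃ (g : PowerSeries ℝ), Conv g ∧ f = single k (1 : ℝ) * (g : LaurentSeries ℝ) := by
  obtain ⟨N, g, hg, rfl⟩ := isConv_iff.1 hf
  refine ⟨N, fun k hk => ⟨PowerSeries.X ^ (N - k).toNat * g, (conv_X.pow _).mul hg, ?_⟩⟩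
  rw [PowerSeries.coe_mul, HahnSeries.ofPowerSeries_X_pow, ← mul_assoc, HahnSeries.single_mul_single]
  simp [hk]

lemma isConv_add {f g : LaurentSeries ℝ} (hf : IsConvergent f) (hg : IsConvergent g) :
    IsConvergent (f + g) := by
  obtain ⟨N, hN⟩ := isConv_iff' hf
  obtain ⟨M, hM⟩ := isConv_iff' hg
  obtain ⟨f', hf', e⟩ := hN (min N M) (min_le_left _ _)
  obtain ⟨g', hg', e'⟩ := hM (min N M) (min_le_right _ _)
  rw [isConv_iff]
  refine ⟨min N M, f' + g', hf'.add hg', ?_⟩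
  rw [PowerSeries.coe_add, mul_add, ← e, ← e']

lemma isConv_mul {f g : LaurentSeries ℝ} (hf : IsConvergent f) (hg : IsConvergent g) :
    IsConvergent (f * g) := by
  obtain ⟨N, f', hf', rfl⟩ := isConv_iff.1 hf
  obtain ⟨M, g', hg', rfl⟩ := isConv_iff.1 hg
  rw [isConv_iff]
  refine ⟨N + M, f' * g', hf'.mul hg', ?_⟩
  rw [PowerSeries.coe_mul, mul_mul_mul_comm, HahnSeries.single_mul_single, one_mul]

lemma isConv_C (c : ℝ) : IsConvergent (HahnSeries.C c) := by
  rw [← PowerSeries.coe_C, isConv_coe]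
  exact conv_C c

lemma isConv_inv {f : LaurentSeries ℝ} (hf : IsConvergent f) : IsConvergent f⁻¹ := by
  by_cases h0 : f = 0
  · subst h0; simpa using isConv_C 0
  have h1 : PowerSeries.constantCoeff f.powerSeriesPart ≠ 0 := by
    rw [← PowerSeries.coeff_zero_eq_constantCoeff_apply, powerSeriesPart_coeff]
    simpa using HahnSeries.coeff_order_eq_zero.not.2 h0
  have h2 : Conv f.powerSeriesPart := by
    rw [← isConv_coe, ofPowerSeries_powerSeriesPart]
    exact isConv_shift _ hf
  have h3 : f⁻¹ = single (-f.order) 1 * ((f.powerSeriesPart⁻¹ : PowerSeries ℝ) : LaurentSeries ℝ) := by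
    apply inv_eq_of_mul_eq_one_right
    have e := single_order_mul_powerSeriesPart f
    calc _ = (single (order f) 1 * (f.powerSeriesPart : LaurentSeries ℝ)) * (single (-f.order) 1 * ((f.powerSeriesPart⁻¹ : PowerSeries ℝ) : LaurentSeries ℝ)) := by rw [e]
      _ = 1 := ?_
    rw [mul_mul_mul_comm, HahnSeries.single_mul_single, ← PowerSeries.coe_mul,
      PowerSeries.mul_inv_cancel _ h1]
    simp
  rw [h3]
  exact isConv_shift _ (isConv_coe.2 (h2.inv h1))

/-- The field of convergent Laurent series. -/
noncomputable def CF : IntermediateField ℝ (LaurentSeries ℝ) where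
  carrier := {f | IsConvergent f}
  mul_mem' := isConv_mul
  add_mem' := isConv_add
  algebraMap_mem' c := by
    rw [LaurentSeries.algebraMap_apply]; exact isConv_C c
  inv_mem' _ := isConv_inv

lemma mem_CF {f : LaurentSeries ℝ} : f ∈ CF ↔ IsConvergent f := Iff.rfl

end ConvEmb

namespace ConvEmb
open HahnSeries LaurentSeries Filter Topology

lemma nhds_integral : {x : LaurentSeries ℝ | Valued.v x ≤ 1} ∈ 𝓝 (0 : LaurentSeries ℝ) :=
  (Valued.isOpen_integer (LaurentSeries ℝ)).mem_nhds (by simp)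

lemma ev_integral {l : Filter ℕ} {f : ℕ → LaurentSeries ℝ} {a : LaurentSeries ℝ}
    (h : Tendsto f l (𝓝 a)) (ha : Valued.v a ≤ 1) : ∀ᶠ i in l, Valued.v (f i) ≤ 1 :=
  h ((Valued.isOpen_integer (LaurentSeries ℝ)).mem_nhds ha)

lemma tendsto_iff {l : Filter ℕ} {f : ℕ → LaurentSeries ℝ} {a : LaurentSeries ℝ} :
    Tendsto f l (𝓝 a) ↔ ∀ N : ℕ, ∀ᶠ i in l, ∀ n : ℤ, n < N → (f i - a).coeff n = 0 := by
  constructor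
  · intro h N
    have h1 : Tendsto (fun i => single (-(N : ℤ)) (1 : ℝ) * (f i - a)) l
        (𝓝 (single (-(N : ℤ)) (1 : ℝ) * (a - a))) :=
      (h.sub_const a).const_mul _
    filter_upwards [ev_integral h1 (by simp)] with i hi n hn
    rw [← WithZero.exp_zero, ← neg_zero, valuation_le_iff_coeff_lt_eq_zero] at hi
    have := hi (n - N) (by omega)
    rw [HahnSeries.coeff_single_mul] at this
    simpa using this
  · intro h U hU
    obtain ⟨γ, hU₁⟩ := Valued.mem_nhds.mp hU
    set g := MonoidWithZeroHom.ValueGroup₀.embedding γ.1 with hg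
    set D := -(WithZero.log g - 1) with hD₀
    have hD : WithZero.exp (-D) < g := by
      rw [← WithZero.lt_log_iff_exp_lt (by simp [hg]), hD₀]
      simp
    refine mem_map.2 ?_
    filter_upwards [h D.toNat] with i hi
    apply hU₁
    rw [Set.mem_ofPred_eq, Valuation.restrict_lt_iff_lt_embedding]
    refine lt_of_le_of_lt ((valuation_le_iff_coeff_lt_eq_zero ℝ).2 fun n hn => ?_) hD
    exact hi n (by omega)

lemma exists_shift (x : LaurentSeries ℝ) :
    ∃ M : ℕ, ∀ n : ℤ, (M : ℤ) ≤ n → Valued.v (x * single n (1 : ℝ)) ≤ 1 := by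
  refine ⟨(-x.order).toNat, fun n hn => ?_⟩
  rw [← WithZero.exp_zero, ← neg_zero, valuation_le_iff_coeff_lt_eq_zero]
  intro m hm
  rw [mul_comm, HahnSeries.coeff_single_mul, HahnSeries.coeff_eq_zero_of_lt_order, mul_zero]
  omega

lemma X_mem_CF : (single (1 : ℤ) (1 : ℝ) : LaurentSeries ℝ) ∈ CF := by
  rw [← PowerSeries.coe_X, mem_CF, isConv_coe]; exact conv_X

lemma single_mem_CF (n : ℤ) : (single n (1 : ℝ) : LaurentSeries ℝ) ∈ CF := by
  rw [← single_zpow']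
  exact zpow_mem X_mem_CF n

lemma hensel_core (d : ℕ) (T : ℕ → ℕ → LaurentSeries ℝ) (T' : ℕ → LaurentSeries ℝ)
    (hT : ∀ k, Tendsto (fun i => T i k) atTop (𝓝 (T' k))) (hC : ∀ i k, T i k ∈ CF)
    (h0 : T' 0 = 0) (h1 : T' 1 ≠ 0) (N₀ : ℕ) :
    ∀ᶠ i in atTop, ∃ y ∈ CF, ∑ k ∈ Finset.range (d + 2), T i k * y ^ k = 0 ∧
      ∀ n : ℤ, n < N₀ → y.coeff n = 0 := by
  choose M hM using fun k => exists_shift (-(T' k / T' 1))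
  set N : ℕ := N₀ + 1 + ∑ k ∈ Finset.range (d + 2), M k with hN
  set e : ℕ → ℤ := fun k => (N : ℤ) * (k - 1) - 1 with he
  have hlim : ∀ k, Tendsto (fun i => -(T i k / T i 1) * single (e k) (1 : ℝ)) atTop
      (𝓝 (-(T' k / T' 1) * single (e k) (1 : ℝ))) := fun k =>
    (((hT k).div (hT 1) h1).neg).mul_const _
  have hintg : ∀ k ∈ Finset.range (d + 2), ∀ᶠ i in atTop, k ≠ 1 →
      Valued.v (-(T i k / T i 1) * single (e k) (1 : ℝ)) ≤ 1 := by
    intro k hk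
    by_cases hk1 : k = 1
    · simp [hk1]
    refine (ev_integral (hlim k) ?_).mono fun i hi _ => hi
    by_cases hk0 : k = 0
    · subst hk0; simp [h0]
    refine hM k _ ?_
    have h2 : M k ≤ ∑ k ∈ Finset.range (d + 2), M k :=
      Finset.single_le_sum (fun _ _ => Nat.zero_le _) hk
    have h3 : (1 : ℤ) ≤ (k : ℤ) - 1 := by omega
    have h4 : (N : ℤ) * 1 ≤ N * ((k : ℤ) - 1) := by gcongr
    simp only [he]
    omega
  have hne : ∀ᶠ i in atTop, T i 1 ≠ 0 := (hT 1).eventually_ne h1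
  filter_upwards [(Finset.eventually_all _).2 hintg, hne] with i hi hi1
  have hG : ∀ k, ∃ G : PowerSeries ℝ, k < d + 2 → (Conv G ∧ (G : LaurentSeries ℝ) =
      if k = 1 then 0 else -(T i k / T i 1) * single (e k) (1 : ℝ)) := by
    intro k
    by_cases hk1 : k = 1
    · exact ⟨0, fun _ => ⟨by simpa using conv_C 0, by simp [hk1]⟩⟩
    by_cases hk : k < d + 2
    · obtain ⟨G, hG⟩ := (val_le_one_iff_eq_coe ℝ _).1 (hi k (Finset.mem_range.2 hk) hk1)
      refine ⟨G, fun _ => ⟨?_, by simp [hk1, hG]⟩⟩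
      rw [← isConv_coe, hG, ← mem_CF]
      exact mul_mem (neg_mem (div_mem (hC _ _) (hC _ _))) (single_mem_CF _)
    · exact ⟨0, fun h => absurd h hk⟩
  choose G hG using hG
  obtain ⟨u, hu⟩ := exists_formal (d + 2) G 0
  have huc : Conv u := conv_of_eq (fun k hk => (hG k hk).1) hu
  set U : LaurentSeries ℝ := (u : LaurentSeries ℝ) with hU
  have hU1 : U = single (1 : ℤ) (1 : ℝ) *
      ∑ k ∈ Finset.range (d + 2), (G k : LaurentSeries ℝ) * U ^ k := by
    have := congrArg (HahnSeries.ofPowerSeries ℤ ℝ) hu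
    simpa [map_sum] using this
  refine ⟨single (N : ℤ) 1 * U, mul_mem (single_mem_CF _) (isConv_coe.2 huc), ?_, ?_⟩
  · have hterm : ∀ k ∈ Finset.range (d + 2), T i k * (single (N : ℤ) (1 : ℝ) * U) ^ k =
        T i 1 * single (N : ℤ) (1 : ℝ) *
          ((if k = 1 then U else 0) - single (1 : ℤ) (1 : ℝ) * ((G k : LaurentSeries ℝ) * U ^ k)) := by
      intro k hk
      rw [(hG k (Finset.mem_range.1 hk)).2]
      split_ifs with hk1
      · subst hk1; simp; ring
      · have : single (e k) (1 : ℝ) * single (1 : ℤ) (1 : ℝ) * single (N : ℤ) (1 : ℝ) =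
            (single (N : ℤ) (1 : ℝ) : LaurentSeries ℝ) ^ k := by
          rw [single_mul_single, single_mul_single, single_pow]
          simp only [he, one_pow, mul_one]
          congr 1
          simp; ring_nf
        rw [mul_pow, ← this]
        field_simp
        ring
    rw [Finset.sum_congr rfl hterm, ← Finset.mul_sum, Finset.sum_sub_distrib, ← Finset.mul_sum,
      ← hU1]
    simp
  · intro n hn
    rw [coeff_single_mul, hU, PowerSeries.coeff_coe, if_pos (by omega), mul_zero]

open Polynomial in
lemma hensel (d : ℕ) (P : ℕ → (LaurentSeries ℝ)[X]) (P' : (LaurentSeries ℝ)[X])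
    (hd : ∀ i, (P i).natDegree < d + 2) (hd' : P'.natDegree < d + 2)
    (hP : ∀ k, Tendsto (fun i => (P i).coeff k) atTop (𝓝 (P'.coeff k)))
    (hC : ∀ i k, (P i).coeff k ∈ CF) (s : LaurentSeries ℝ) (σ : ℕ → LaurentSeries ℝ)
    (hσ : ∀ i, σ i ∈ CF) (hσs : Tendsto σ atTop (𝓝 s))
    (h0 : P'.eval s = 0) (h1 : P'.derivative.eval s ≠ 0) (N : ℕ) :
    ∀ᶠ i in atTop, ∃ y ∈ CF, (P i).eval y = 0 ∧ ∀ n : ℤ, n < N → (y - s).coeff n = 0 := by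
  have hexp : ∀ (Q : (LaurentSeries ℝ)[X]) (r : LaurentSeries ℝ) (k : ℕ), Q.natDegree < d + 2 →
      (taylor r Q).coeff k = ∑ j ∈ Finset.range (d + 2),
        (((j + k).choose k : LaurentSeries ℝ) * Q.coeff (j + k)) * r ^ j := by
    intro Q r k hQ
    rw [taylor_coeff, eval_eq_sum_range' (n := d + 2)]
    · simp only [Polynomial.hasseDeriv_coeff]
    · exact lt_of_le_of_lt (natDegree_hasseDeriv_le _ _) (by omega)
  have := hensel_core d (fun i k => (taylor (σ i) (P i)).coeff k) (fun k => (taylor s P').coeff k)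
    ?_ ?_ ?_ ?_ N
  · filter_upwards [this, tendsto_iff.1 hσs N] with i hi hi2
    obtain ⟨y, hy, hy0, hyN⟩ := hi
    refine ⟨y + σ i, add_mem hy (hσ i), ?_, ?_⟩
    · rw [← taylor_eval, eval_eq_sum_range' (n := d + 2) (by rw [natDegree_taylor]; exact hd i)]
      exact hy0
    · intro n hn
      rw [add_sub_assoc, HahnSeries.coeff_add, hyN n hn, hi2 n hn, add_zero]
  · intro k
    simp only [hexp _ _ k (hd _), hexp _ _ k hd']
    exact tendsto_finsetSum _ fun j _ => ((hP _).const_mul _).mul (hσs.pow _)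
  · intro i k
    rw [hexp _ _ k (hd _)]
    exact sum_mem fun j _ => mul_mem (mul_mem (natCast_mem _ _) (hC _ _)) (pow_mem (hσ i) _)
  · simpa using h0
  · simpa using h1

lemma exists_trunc (s : LaurentSeries ℝ) : ∃ σ : ℕ → LaurentSeries ℝ,
    (∀ i, σ i ∈ IntermediateField.adjoin ℝ {(single (1 : ℤ) (1 : ℝ) : LaurentSeries ℝ)}) ∧
      Tendsto σ atTop (𝓝 s) := by
  set F := s.powerSeriesPart with hF
  set t : ℕ → PowerSeries ℝ := fun i => ∑ j ∈ Finset.range i,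
    PowerSeries.C (PowerSeries.coeff j F) * PowerSeries.X ^ j with ht
  have hs : single s.order (1 : ℝ) * (F : LaurentSeries ℝ) = s := single_order_mul_powerSeriesPart s
  have hX := IntermediateField.mem_adjoin_simple_self ℝ (single (1 : ℤ) (1 : ℝ) : LaurentSeries ℝ)
  refine ⟨fun i => single s.order (1 : ℝ) * (t i : LaurentSeries ℝ), fun i => ?_, ?_⟩
  · refine mul_mem ?_ ?_
    · rw [← single_zpow' s.order]; exact zpow_mem hX _
    · simp only [ht, map_sum, PowerSeries.coe_mul, PowerSeries.coe_C, PowerSeries.coe_pow,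
        PowerSeries.coe_X]
      refine sum_mem fun j _ => mul_mem ?_ (pow_mem hX _)
      rw [← LaurentSeries.algebraMap_apply]
      exact IntermediateField.algebraMap_mem _ _
  · rw [tendsto_iff]
    intro N
    filter_upwards [eventually_ge_atTop (N - s.order).toNat] with i hi n hn
    have e : single s.order (1 : ℝ) * (t i : LaurentSeries ℝ) - s =
        single s.order (1 : ℝ) * ((t i - F : PowerSeries ℝ) : LaurentSeries ℝ) := by
      rw [PowerSeries.coe_sub, mul_sub, hs]
    rw [e, coeff_single_mul, PowerSeries.coeff_coe]
    split_ifs with hneg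
    · simp
    · have hlt : (n - s.order).natAbs < i := by omega
      rw [map_sub, one_mul, sub_eq_zero]
      simp [ht, PowerSeries.coeff_C_mul, PowerSeries.coeff_X_pow, hlt]

end ConvEmb

namespace ConvEmb
open HahnSeries LaurentSeries Filter Topology

/-- Base change of rational power series to real Laurent series. -/
noncomputable def rho : PowerSeries ℚ →+* LaurentSeries ℝ :=
  (HahnSeries.ofPowerSeries ℤ ℝ).comp (PowerSeries.map (algebraMap ℚ ℝ))

lemma rho_coeff (f : PowerSeries ℚ) (n : ℕ) :
    (rho f).coeff n = ((PowerSeries.coeff n f : ℚ) : ℝ) := by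
  simp [rho]

/-- Rational convergent power series. -/
noncomputable def AQ : Subalgebra ℚ (PowerSeries ℚ) where
  carrier := {f | rho f ∈ CF}
  mul_mem' {a b} ha hb := by
    change rho (a * b) ∈ CF
    rw [map_mul]; exact mul_mem ha hb
  add_mem' {a b} ha hb := by
    change rho (a + b) ∈ CF
    rw [map_add]; exact add_mem ha hb
  algebraMap_mem' c := by
    change rho (PowerSeries.C c) ∈ CF
    simp only [rho, RingHom.comp_apply, PowerSeries.map_C]
    rw [mem_CF, isConv_coe]
    exact conv_C _

lemma algInd {ι : Type*} (x : ι → AQ) (hx : AlgebraicIndependent ℚ x) :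
    AlgebraicIndependent ℝ (fun i => rho (x i : PowerSeries ℚ)) := by
  rw [algebraicIndependent_iff] at hx ⊢
  intro p hp
  by_contra hp0
  obtain ⟨α, hα⟩ := MvPolynomial.ne_zero_iff.1 hp0
  obtain ⟨ℓ, hℓ⟩ : ∃ ℓ : ℝ →ₗ[ℚ] ℚ, ℓ (p.coeff α) ≠ 0 := by
    by_contra! h
    exact hα ((Module.forall_dual_apply_eq_zero_iff ℚ _).1 h)
  set q : MvPolynomial ι ℚ := ∑ β ∈ p.support, MvPolynomial.monomial β (ℓ (p.coeff β)) with hq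
  have hqα : q.coeff α = ℓ (p.coeff α) := by
    classical
    rw [hq, MvPolynomial.coeff_sum]
    simp only [MvPolynomial.coeff_monomial]
    rw [Finset.sum_ite_eq', if_pos (MvPolynomial.mem_support_iff.2 hα)]
  apply hℓ
  rw [← hqα, hx q ?_, MvPolynomial.coeff_zero]
  apply Subtype.ext
  ext n
  set z : (ι →₀ ℕ) → PowerSeries ℚ := fun β => ∏ i ∈ β.support, (x i : PowerSeries ℚ) ^ β i with hz
  have h1 : (MvPolynomial.aeval x q : PowerSeries ℚ) =
      ∑ β ∈ p.support, PowerSeries.C (ℓ (p.coeff β)) * z β := by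
    rw [hq, map_sum, AddSubmonoidClass.coe_finsetSum]
    refine Finset.sum_congr rfl fun β _ => ?_
    rw [MvPolynomial.aeval_monomial]
    simp [hz, Finsupp.prod]
  have h2 : MvPolynomial.aeval (fun i => rho (x i : PowerSeries ℚ)) p =
      ∑ β ∈ p.support, HahnSeries.C (p.coeff β) * rho (z β) := by
    rw [MvPolynomial.aeval_def, MvPolynomial.eval₂_eq]
    refine Finset.sum_congr rfl fun β _ => ?_
    rw [LaurentSeries.algebraMap_apply]
    simp [hz, map_prod]
  have h3 := congrArg (fun f : LaurentSeries ℝ => f.coeff (n : ℤ)) (h2.symm.trans hp)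
  simp only [HahnSeries.coeff_sum, HahnSeries.coeff_zero, HahnSeries.C_apply,
    HahnSeries.coeff_single_zero_mul, rho_coeff] at h3
  have h4 := congrArg ℓ h3
  rw [map_zero, map_sum] at h4
  rw [h1, map_sum, ZeroMemClass.coe_zero, map_zero, ← h4]
  refine Finset.sum_congr rfl fun β _ => ?_
  rw [PowerSeries.coeff_C_mul, mul_comm (p.coeff β), ← Rat.smul_def, map_smul, smul_eq_mul, mul_comm]

lemma AQ_uncountable : ¬ Countable AQ := by
  intro h
  have hf : ∀ b : ℕ → Bool, (PowerSeries.mk fun n => if b n then (1 : ℚ) else 0) ∈ AQ := by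
    intro b
    change rho _ ∈ CF
    rw [mem_CF]
    simp only [rho, RingHom.comp_apply]
    rw [isConv_coe]
    refine ⟨1 / 2, by norm_num, Summable.of_nonneg_of_le (fun n => by positivity) (fun n => ?_)
      (summable_geometric_two)⟩
    rw [PowerSeries.coeff_map, PowerSeries.coeff_mk]
    split_ifs <;> simp
  have hinj : Function.Injective (fun b : ℕ → Bool => (⟨_, hf b⟩ : AQ)) := by
    intro b c hbc
    funext n
    have := congrArg (fun f : AQ => PowerSeries.coeff n (f : PowerSeries ℚ)) hbc
    simp only [PowerSeries.coeff_mk] at this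
    cases hb : b n <;> cases hc : c n <;> simp [hb, hc] at this ⊢
  have : Countable (ℕ → Bool) := hinj.countable
  rw [← Cardinal.mk_le_aleph0_iff] at this
  simp at this
  exact absurd this (not_le.2 (Cardinal.cantor _))

lemma not_finTrdeg : ¬ FinTrdeg ℝ CF := by
  intro hfin
  obtain ⟨ι, x, hx⟩ := exists_isTranscendenceBasis' ℚ AQ
  have h1 := algInd x hx.1
  have h2 : AlgebraicIndependent ℝ
      (fun i => (⟨rho (x i : PowerSeries ℚ), (x i).2⟩ : CF)) := by
    apply AlgebraicIndependent.of_comp CF.val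
    exact h1
  have : Finite ι := finite_of_algebraicIndependent h2
  apply AQ_uncountable
  have halg := hx.isAlgebraic
  have hc := Algebra.IsAlgebraic.cardinalMk_le_max (Algebra.adjoin ℚ (Set.range x)) AQ
  have hc2 : Countable (Algebra.adjoin ℚ (Set.range x)) := by
    have : Countable (MvPolynomial ι ℚ) := by
      rw [← Cardinal.mk_le_aleph0_iff]
      refine MvPolynomial.cardinalMk_le_max_lift.trans ?_
      simp
    exact hx.1.aevalEquiv.symm.injective.countable
  rw [← Cardinal.mk_le_aleph0_iff] at hc2 ⊢
  exact hc.trans (max_le hc2 le_rfl)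

end ConvEmb

namespace ConvEmb
open HahnSeries LaurentSeries Filter Topology IntermediateField

lemma ext_alg {E : IntermediateField ℝ (LaurentSeries ℝ)} (φ : E →+* CF) (s : LaurentSeries ℝ)
    (hs : IsIntegral E s) (y : CF) (hy : (minpoly E s).eval₂ φ y = 0) :
    ∃ ψ : E⟮s⟯ →+* CF, (∀ e : E, ψ (algebraMap E E⟮s⟯ e) = φ e) ∧
      ψ (AdjoinSimple.gen E s) = y := by
  let : Algebra E CF := φ.toAlgebra
  have hmem : y ∈ (minpoly E s).aroots CF := by
    rw [Polynomial.mem_aroots]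
    exact ⟨minpoly.ne_zero hs, hy⟩
  let χ : E⟮s⟯ →ₐ[E] CF := (algHomAdjoinIntegralEquiv E hs).symm ⟨y, hmem⟩
  refine ⟨χ.toRingHom, fun e => ?_, ?_⟩
  · exact χ.commutes e
  · exact algHomAdjoinIntegralEquiv_symm_apply_gen E hs ⟨y, hmem⟩

lemma ext_trans {E : IntermediateField ℝ (LaurentSeries ℝ)} (φ : E →+* CF) (s : LaurentSeries ℝ)
    (hs : Transcendental E s) (y : CF)
    (hy : letI : Algebra E CF := φ.toAlgebra; Transcendental E y) :
    ∃ ψ : E⟮s⟯ →+* CF, (∀ e : E, ψ (algebraMap E E⟮s⟯ e) = φ e) ∧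
      ψ (AdjoinSimple.gen E s) = y := by
  let : Algebra E CF := φ.toAlgebra
  let e₁ := (RatFunc.algEquivOfTranscendental s hs).symm
  let e₂ := RatFunc.algEquivOfTranscendental y hy
  let χ : E⟮s⟯ →ₐ[E] CF := (adjoin E {y}).val.comp (e₂.toAlgHom.comp e₁.toAlgHom)
  refine ⟨χ.toRingHom, fun e => ?_, ?_⟩
  · exact χ.commutes e
  · have h1 : e₁ (AdjoinSimple.gen E s) = RatFunc.X := by
      rw [AlgEquiv.symm_apply_eq]
      apply Subtype.ext
      rw [RatFunc.algEquivOfTranscendental_X]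
      rfl
    change ((e₂ (e₁ (AdjoinSimple.gen E s)) : E⟮y⟯) : CF) = y
    rw [h1]
    exact RatFunc.algEquivOfTranscendental_X y hy

/-- The inductive property. -/
def Good (E : IntermediateField ℝ (LaurentSeries ℝ)) : Prop :=
  FinTrdeg ℝ E ∧ ∃ hX : single (1 : ℤ) (1 : ℝ) ∈ E, ∃ φ : ℕ → E →ₐ[ℝ] CF,
    (∀ n, φ n ⟨_, hX⟩ = ⟨_, X_mem_CF⟩) ∧
    ∀ a : E, Tendsto (fun n => (φ n a : LaurentSeries ℝ)) atTop (𝓝 (a : LaurentSeries ℝ))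

lemma finTrdeg_simple {F L : Type*} [Field F] [Field L] [Algebra F L] (x : L) :
    FinTrdeg F F⟮x⟯ := by
  have : Algebra.EssFiniteType F F⟮x⟯ :=
    IntermediateField.essFiniteType_iff.2 ⟨{x}, by simp⟩
  infer_instance

lemma adjX_le : ℝ⟮(single (1 : ℤ) (1 : ℝ) : LaurentSeries ℝ)⟯ ≤ CF :=
  adjoin_simple_le_iff.2 X_mem_CF

lemma good_base : Good ℝ⟮(single (1 : ℤ) (1 : ℝ) : LaurentSeries ℝ)⟯ :=
  ⟨finTrdeg_simple _, mem_adjoin_simple_self _ _, fun _ => inclusion adjX_le, fun _ => rfl,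
    fun _ => tendsto_const_nhds⟩

lemma step_trans {E : IntermediateField ℝ (LaurentSeries ℝ)} [FinTrdeg ℝ E] (φ : E →ₐ[ℝ] CF)
    (hX : single (1 : ℤ) (1 : ℝ) ∈ E) (hφ : φ ⟨_, hX⟩ = ⟨_, X_mem_CF⟩)
    (s : LaurentSeries ℝ) (hs : Transcendental E s) (N : ℕ) :
    ∃ ψ : E⟮s⟯ →+* CF, (∀ e : E, ψ (algebraMap E E⟮s⟯ e) = φ e) ∧
      ∀ n : ℤ, n < N → ((ψ (AdjoinSimple.gen E s) : LaurentSeries ℝ) - s).coeff n = 0 := by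
  let : Algebra E CF := φ.toRingHom.toAlgebra
  have hmap : ∀ e : E, algebraMap E CF e = φ e := fun _ => rfl
  have : IsScalarTower ℝ E CF := IsScalarTower.of_algebraMap_eq fun r => (φ.commutes r).symm
  obtain ⟨z, hz⟩ : ∃ z : CF, Transcendental E z := by
    by_contra! h
    have : Algebra.IsAlgebraic E CF := ⟨fun z => by simpa [Transcendental] using h z⟩
    exact not_finTrdeg (FinTrdeg.trans ℝ E CF)
  have hrange : ∀ x : LaurentSeries ℝ, x ∈ ℝ⟮(single (1 : ℤ) (1 : ℝ) : LaurentSeries ℝ)⟯ →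
      ∃ e : E, (φ e : LaurentSeries ℝ) = x := by
    have : ℝ⟮(single (1 : ℤ) (1 : ℝ) : LaurentSeries ℝ)⟯ ≤ (CF.val.comp φ).fieldRange := by
      rw [adjoin_simple_le_iff]
      refine ⟨⟨_, hX⟩, ?_⟩
      change ((φ ⟨_, hX⟩ : CF) : LaurentSeries ℝ) = _
      rw [hφ]
    intro x hx
    obtain ⟨e, he⟩ := this hx
    exact ⟨e, he⟩
  obtain ⟨σ, hσ, hσs⟩ := exists_trunc s
  obtain ⟨j, hj⟩ := (tendsto_iff.1 hσs N).exists
  obtain ⟨M, hM⟩ := exists_shift (z : LaurentSeries ℝ)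
  obtain ⟨e₁, he₁⟩ := hrange _ (hσ j)
  have hpow : (single (1 : ℤ) (1 : ℝ) : LaurentSeries ℝ) ^ (M + N) = single ((M : ℤ) + N) 1 := by
    rw [← single_zpow' ((M : ℤ) + N), ← Nat.cast_add, zpow_natCast]
  set c : E := ⟨_, hX⟩ ^ (M + N) with hc
  have hc0 : c ≠ 0 := by
    apply pow_ne_zero
    intro h
    have := congrArg (Subtype.val) h
    simp at this
  have hφc : (φ c : LaurentSeries ℝ) = single ((M : ℤ) + N) 1 := by
    rw [hc, map_pow, hφ, ← hpow]; rfl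
  set y : CF := φ e₁ + φ c * z with hy
  have hyt : Transcendental E y := by
    intro hya
    apply hz
    have hφc0 : φ c ≠ 0 := by simpa using hc0
    have : z = (φ c)⁻¹ * (y - φ e₁) := by rw [hy]; field_simp; ring
    rw [this]
    have h1 : IsAlgebraic E (φ e₁) := isAlgebraic_algebraMap e₁
    have h2 : IsAlgebraic E (φ c) := isAlgebraic_algebraMap c
    exact h2.inv.mul (hya.sub h1)
  obtain ⟨ψ, h1, h2⟩ := ext_trans φ.toRingHom s hs y hyt
  refine ⟨ψ, h1, fun n hn => ?_⟩
  rw [h2]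
  have e : (y : LaurentSeries ℝ) - s = (σ j - s) +
      single (N : ℤ) 1 * ((z : LaurentSeries ℝ) * single (M : ℤ) 1) := by
    have : (y : LaurentSeries ℝ) = φ e₁ + φ c * z := rfl
    rw [this, he₁, hφc, add_comm (M : ℤ), ← mul_one (1 : ℝ), ← single_mul_single]
    simp only [mul_one]
    ring
  rw [e, HahnSeries.coeff_add, hj n hn, coeff_single_mul]
  have := hM M le_rfl
  rw [← WithZero.exp_zero, ← neg_zero, valuation_le_iff_coeff_lt_eq_zero] at this
  rw [this (n - N) (by omega)]
  simp

lemma step_alg {E : IntermediateField ℝ (LaurentSeries ℝ)} (φ : ℕ → E →ₐ[ℝ] CF)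
    (hφ : ∀ a : E, Tendsto (fun n => (φ n a : LaurentSeries ℝ)) atTop (𝓝 (a : LaurentSeries ℝ)))
    (s : LaurentSeries ℝ) (hs : IsIntegral E s) (N : ℕ) :
    ∀ᶠ i in atTop, ∃ ψ : E⟮s⟯ →+* CF, (∀ e : E, ψ (algebraMap E E⟮s⟯ e) = φ i e) ∧
      ∀ n : ℤ, n < N → ((ψ (AdjoinSimple.gen E s) : LaurentSeries ℝ) - s).coeff n = 0 := by
  obtain ⟨σ, hσ, hσs⟩ := exists_trunc s
  set f : ℕ → E →+* LaurentSeries ℝ := fun i => (CF.val.comp (φ i)).toRingHom with hf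
  have hfa : ∀ i e, f i e = φ i e := fun _ _ => rfl
  have := hensel (minpoly E s).natDegree (fun i => (minpoly E s).map (f i))
    ((minpoly E s).map (algebraMap E (LaurentSeries ℝ))) ?_ ?_ ?_ ?_ s σ
    (fun i => adjX_le (hσ i)) hσs ?_ ?_ N
  · filter_upwards [this] with i hi
    obtain ⟨y, hyC, hy0, hyN⟩ := hi
    have hroot : (minpoly E s).eval₂ (φ i).toRingHom (⟨y, hyC⟩ : CF) = 0 := by
      apply Subtype.ext
      rw [Polynomial.eval_map] at hy0
      have := Polynomial.hom_eval₂ (minpoly E s) (φ i).toRingHom CF.val.toRingHom ⟨y, hyC⟩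
      exact this.trans hy0
    obtain ⟨ψ, h1, h2⟩ := ext_alg (φ i).toRingHom s hs ⟨y, hyC⟩ hroot
    refine ⟨ψ, h1, ?_⟩
    rw [h2]
    exact hyN
  · intro i
    rw [Polynomial.natDegree_map]; omega
  · rw [Polynomial.natDegree_map]; omega
  · intro k
    simp only [Polynomial.coeff_map]
    exact hφ _
  · intro i k
    rw [Polynomial.coeff_map]
    exact (φ i _).2
  · rw [Polynomial.eval_map_algebraMap, minpoly.aeval]
  · rw [Polynomial.derivative_map, Polynomial.eval_map_algebraMap]
    exact (minpoly.irreducible hs).separable.aeval_derivative_ne_zero (minpoly.aeval _ _)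

lemma good_step {E : IntermediateField ℝ (LaurentSeries ℝ)} (hE : Good E) (s : LaurentSeries ℝ) :
    Good (E⟮s⟯.restrictScalars ℝ) := by
  obtain ⟨hfin, hX, φ, hφX, hφ⟩ := hE
  have key : ∀ N : ℕ, ∃ i ≥ N, ∃ ψ : E⟮s⟯ →+* CF,
      (∀ e : E, ψ (algebraMap E E⟮s⟯ e) = φ i e) ∧
      ∀ n : ℤ, n < N → ((ψ (AdjoinSimple.gen E s) : LaurentSeries ℝ) - s).coeff n = 0 := by
    intro N
    by_cases hs : IsAlgebraic E s
    · obtain ⟨i, h1, h2⟩ :=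
        ((step_alg φ hφ s hs.isIntegral N).and (eventually_ge_atTop N)).exists
      exact ⟨i, h2, h1⟩
    · exact ⟨N, le_rfl, step_trans (φ N) hX (hφX N) s hs N⟩
  choose i hi ψ hψ hψs using key
  have hi' : Tendsto i atTop atTop := tendsto_atTop_mono hi tendsto_id
  have hgen : Tendsto (fun n => (ψ n (AdjoinSimple.gen E s) : LaurentSeries ℝ)) atTop (𝓝 s) := by
    rw [tendsto_iff]
    intro N
    filter_upwards [eventually_ge_atTop N] with k hk n hn
    exact hψs k n (by omega)
  have hall : ∀ (a : LaurentSeries ℝ) (ha : a ∈ E⟮s⟯),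
      Tendsto (fun n => (ψ n ⟨a, ha⟩ : LaurentSeries ℝ)) atTop (𝓝 a) := by
    intro a ha
    induction ha using adjoin_induction with
    | mem x hx =>
      obtain rfl : x = s := hx
      exact hgen
    | algebraMap e =>
      have : ∀ n, (ψ n ⟨algebraMap E (LaurentSeries ℝ) e, IntermediateField.algebraMap_mem _ e⟩ : LaurentSeries ℝ)
        = φ (i n) e := fun n => congrArg _ (hψ n e)
      simp only [this]
      exact (hφ e).comp hi'
    | add x y hx hy h1 h2 =>
      refine (h1.add h2).congr fun n => ?_
      rw [← AddMemClass.coe_add, ← map_add]; rfl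
    | inv x hx h1 =>
      by_cases h0 : x = 0
      · subst h0
        have : ∀ n, (ψ n ⟨0⁻¹, inv_mem hx⟩ : LaurentSeries ℝ) = 0 := by
          intro n
          have : (⟨0⁻¹, inv_mem hx⟩ : E⟮s⟯) = 0 := by apply Subtype.ext; simp
          rw [this, map_zero]; rfl
        simp only [this]
        rw [inv_zero]
        exact tendsto_const_nhds
      · refine (h1.inv₀ h0).congr fun n => ?_
        have : (⟨x⁻¹, inv_mem hx⟩ : E⟮s⟯) = (⟨x, hx⟩ : E⟮s⟯)⁻¹ := rfl
        rw [this, map_inv₀]; rfl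
    | mul x y hx hy h1 h2 =>
      refine (h1.mul h2).congr fun n => ?_
      rw [← MulMemClass.coe_mul, ← map_mul]; rfl
  have hfin2 : FinTrdeg E E⟮s⟯ := finTrdeg_simple s
  refine ⟨FinTrdeg.trans ℝ E E⟮s⟯, IntermediateField.algebraMap_mem E⟮s⟯ ⟨_, hX⟩,
    fun n => { ψ n with commutes' := fun r => ?_ }, fun n => ?_, fun a => hall a.1 a.2⟩
  · exact (hψ n (algebraMap ℝ E r)).trans ((φ (i n)).commutes r)
  · exact (hψ n ⟨_, hX⟩).trans (hφX _)

lemma good_adjoin (S : Finset (LaurentSeries ℝ)) :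
    Good (adjoin ℝ ({(single (1 : ℤ) (1 : ℝ) : LaurentSeries ℝ)} ∪ (S : Set (LaurentSeries ℝ)))) := by
  classical
  induction S using Finset.induction_on with
  | empty => simpa using good_base
  | insert s S _ ih =>
    have := good_step ih s
    rw [adjoin_adjoin_left] at this
    rw [Finset.coe_insert, ← Set.union_singleton, ← Set.union_assoc]
    exact this

end ConvEmb

/-- Approximation theorem: every finitely generated subfield `L` of `ℝ((h))`
containing `ℝ(h)` is isomorphic, over `ℝ(h)`, to a subfield of the field of
convergent Laurent series; moreover the embedding can be chosen to agree with the
identity modulo `h^m` on any prescribed finite family of elements of `L`. -/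
theorem exists_convergent_embedding
    (L : Subfield (LaurentSeries ℝ))
    (hC : ∀ c : ℝ, (HahnSeries.C c : LaurentSeries ℝ) ∈ L)
    (hX : (HahnSeries.single (1 : ℤ) (1 : ℝ) : LaurentSeries ℝ) ∈ L)
    (hfg : ∃ S : Finset (LaurentSeries ℝ),
      L = Subfield.closure
        (Set.range (fun c : ℝ => (HahnSeries.C c : LaurentSeries ℝ)) ∪ ↑S))
    (t : ℕ) (a : Fin t → L) (m : ℕ) :
    ∃ φ : L →+* LaurentSeries ℝ,
      (∀ c : ℝ, φ ⟨HahnSeries.C c, hC c⟩ = HahnSeries.C c) ∧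
      φ ⟨HahnSeries.single (1 : ℤ) (1 : ℝ), hX⟩ = HahnSeries.single (1 : ℤ) (1 : ℝ) ∧
      (∀ x : L, IsConvergent (φ x)) ∧
      (∀ i : Fin t, ∀ n : ℤ, n < (m : ℤ) →
        (φ (a i) - ((a i : LaurentSeries ℝ))).coeff n = 0) := by
  obtain ⟨S, hS⟩ := hfg
  obtain ⟨E, hE, hgood⟩ : ∃ E : IntermediateField ℝ (LaurentSeries ℝ),
      E = IntermediateField.adjoin ℝ ({(HahnSeries.single (1 : ℤ) (1 : ℝ) : LaurentSeries ℝ)} ∪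
        (S : Set (LaurentSeries ℝ))) ∧ ConvEmb.Good E := ⟨_, rfl, ConvEmb.good_adjoin S⟩
  obtain ⟨_, hX', φ, hφX, hφ⟩ := hgood
  have hle : L ≤ E.toSubfield := by
    rw [hS, Subfield.closure_le]
    rintro x (⟨c, rfl⟩ | hx)
    · change HahnSeries.C c ∈ E
      rw [← LaurentSeries.algebraMap_apply]
      exact E.algebraMap_mem c
    · rw [hE]
      exact IntermediateField.subset_adjoin _ _ (Or.inr hx)
  have hev : ∀ᶠ k in Filter.atTop, ∀ i : Fin t, ∀ n : ℤ, n < (m : ℤ) →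
      ((φ k ⟨a i, hle (a i).2⟩ : LaurentSeries ℝ) - (a i : LaurentSeries ℝ)).coeff n = 0 :=
    Filter.eventually_all.2 fun i => ConvEmb.tendsto_iff.1 (hφ ⟨a i, hle (a i).2⟩) m
  obtain ⟨k, hk⟩ := hev.exists
  refine ⟨(ConvEmb.CF.val.comp (φ k)).toRingHom.comp (Subfield.inclusion hle), ?_, ?_, ?_, hk⟩
  · intro c
    have h := congrArg Subtype.val ((φ k).commutes c)
    have h2 : (⟨HahnSeries.C c, hle (hC c)⟩ : E) = algebraMap ℝ E c :=
      Subtype.ext (LaurentSeries.algebraMap_apply ℝ c).symm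
    change ((φ k ⟨HahnSeries.C c, hle (hC c)⟩ : ConvEmb.CF) : LaurentSeries ℝ) = _
    rw [h2]
    exact h.trans (LaurentSeries.algebraMap_apply ℝ c)
  · exact congrArg Subtype.val (hφX k)
  · intro x
    exact (φ k ⟨x, hle x.2⟩).2
end
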